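/- arXiv:1412.0562 — 2 statements merged into one kernel-verified Lean document; each statement's English description precedes it below -/
import Mathlib

section
/- Let $D \subseteq \mathbb{C}^n$ be a domain with Lipschitz boundary. Then for every boundary point $P \in \partial D$ there is an open neighbourhood $U$ of $P$ such that every plurisubharmonic function $u$ on $D \cap U$ is the pointwise limit of a decreasing sequence of continuous plurisubharmonic functions on $D \cap U$. -/
open MeasureTheory Real Filter Topology Metric

noncomputable section

/-- Encoding of the circle mean `(2π)⁻¹ ∫₀^{2π} u(a+e^{iθ}b) dθ` for an `EReal`-valued
(upper semicontinuous) function `u`, as the infimum of the means of the truncations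
`max (u ·) (-m)`. -/
def circleMean {n : ℕ} (u : EuclideanSpace ℂ (Fin n) → EReal)
    (a b : EuclideanSpace ℂ (Fin n)) : EReal :=
  ⨅ m : ℕ, (((2 * π)⁻¹ *
      ∫ θ in (0:ℝ)..(2 * π),
        (u (a + Complex.exp ((θ : ℂ) * Complex.I) • b) ⊔ ((-(m : ℝ) : ℝ) : EReal)).toReal : ℝ)
      : EReal)

/-- `u : Ω → [-∞, ∞)` is plurisubharmonic on an open `Ω ⊆ ℂⁿ`. -/
def IsPSHOn {n : ℕ} (Ω : Set (EuclideanSpace ℂ (Fin n)))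
    (u : EuclideanSpace ℂ (Fin n) → EReal) : Prop :=
  UpperSemicontinuousOn u Ω ∧
  (∀ z ∈ Ω, u z ≠ ⊤) ∧
  (∀ z ∈ Ω, ∃ w ∈ connectedComponentIn Ω z, u w ≠ ⊥) ∧
  ∀ a b : EuclideanSpace ℂ (Fin n),
    (∀ l : ℂ, ‖l‖ ≤ 1 → a + l • b ∈ Ω) → u a ≤ circleMean u a b

/-- `D` is an `𝒮`-domain: a domain on which every plurisubharmonic function is the
pointwise limit of a decreasing sequence of smooth plurisubharmonic functions. -/
def IsSDomain {n : ℕ} (D : Set (EuclideanSpace ℂ (Fin n))) : Prop :=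
  IsOpen D ∧ IsConnected D ∧
  ∀ u : EuclideanSpace ℂ (Fin n) → EReal, IsPSHOn D u →
    ∃ v : ℕ → EuclideanSpace ℂ (Fin n) → ℝ,
      (∀ k, ContDiffOn ℝ (⊤ : ℕ∞) (v k) D) ∧
      (∀ k, IsPSHOn D (fun z => ((v k z : ℝ) : EReal))) ∧
      (∀ k, ∀ z ∈ D, v (k+1) z ≤ v k z) ∧
      (∀ z ∈ D, Tendsto (fun k => ((v k z : ℝ) : EReal)) atTop (nhds (u z)))

/-- `D ⊆ ℂⁿ` has Lipschitz boundary: near each boundary point, after a rigid motion of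
(the real) coordinates, the boundary is the graph of a Lipschitz function and the domain
is the region below the graph. -/
def HasLipschitzBoundary {n : ℕ} (D : Set (EuclideanSpace ℂ (Fin n))) : Prop :=
  ∀ p ∈ frontier D,
    ∃ (φ : EuclideanSpace ℂ (Fin n) ≃ᵢ WithLp 2 (EuclideanSpace ℝ (Fin (2*n-1)) × ℝ))
      (F : EuclideanSpace ℝ (Fin (2*n-1)) → ℝ) (L : NNReal)
      (V : Set (WithLp 2 (EuclideanSpace ℝ (Fin (2*n-1)) × ℝ))),
      LipschitzWith L F ∧ IsOpen V ∧ φ p ∈ V ∧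
      ∀ q ∈ V, (φ.symm q ∈ D ↔
        (WithLp.equiv 2 (EuclideanSpace ℝ (Fin (2*n-1)) × ℝ) q).2 <
          F (WithLp.equiv 2 (EuclideanSpace ℝ (Fin (2*n-1)) × ℝ) q).1)

/-!
Near a boundary point, `Ω = D ∩ U` is star-shaped with respect to every point of a small closed
ball `closure B` lying far enough below the graph. Regularize `u` by `z ↦ sup u` over the points
`(1 - s)z + sx` with `0 < s < ε` and `x ∈ B`, an open convex cone with apex `z`. For fixed `s` and
`x` such a point depends affinely on `z`, so the supremum inherits the sub-mean value property.
It is lower semicontinuous because the cones are open. It is upper semicontinuous because `u` is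
upper semicontinuous on the compact closed cones and its suprema over a closed cone and over the
open one agree: around a point of the closure there are arbitrarily small circles with an arc of
fixed angle in the open cone, so the sub-mean value inequality bounds `u` at that point. As `ε`
decreases to `0` the cones shrink to their apex and the suprema decrease to `u z`.
-/

section SubMeanValue

variable {E : Type*} [NormedAddCommGroup E] [NormedSpace ℂ E]

/-- The point at angle `θ` on the circle `{a + e^{iθ}b}` bounding the analytic disc with centre `a`
and radius vector `b`. -/
abbrev circlePoint (a b : E) (θ : ℝ) : E := a + Complex.exp ((θ : ℂ) * Complex.I) • b

theorem continuous_circlePoint (a b : E) : Continuous (circlePoint a b) := by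
  fun_prop

theorem circlePoint_mem_of_disc_subset {S : Set E} {a b : E}
    (hab : ∀ l : ℂ, ‖l‖ ≤ 1 → a + l • b ∈ S) (θ : ℝ) : circlePoint a b θ ∈ S :=
  hab _ (Complex.norm_exp_ofReal_mul_I θ).le

theorem add_smul_mem_ball {a b q : E} {r : ℝ} (h : dist a q + ‖b‖ < r) {l : ℂ} (hl : ‖l‖ ≤ 1) :
    a + l • b ∈ ball q r := by
  have hlb : ‖l • b‖ ≤ ‖b‖ :=
    (norm_smul l b).trans_le (mul_le_of_le_one_left (norm_nonneg b) hl)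
  calc dist (a + l • b) q ≤ dist (a + l • b) a + dist a q := dist_triangle _ _ _
    _ = ‖l • b‖ + dist a q := by rw [dist_self_add_left]
    _ < r := by linarith

theorem lineMap_add_smul (a b x : E) (s : ℝ) (l : ℂ) :
    AffineMap.lineMap a x s + l • ((1 - s) • b) = AffineMap.lineMap (a + l • b) x s := by
  simp only [AffineMap.lineMap_apply_module, smul_comm l (1 - s) b]
  module

theorem exists_arc_circlePoint_mem {a b : E} {C : Set E} (hC : IsOpen C) (hab : a + b ∈ C) :
    ∃ α ∈ Set.Ioc 0 (2 * π), ∀ θ ∈ Set.Icc 0 α, circlePoint a b θ ∈ C := by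
  have hC0 : ∀ᶠ θ in 𝓝[≥] (0 : ℝ), circlePoint a b θ ∈ C :=
    nhdsWithin_le_nhds <| (continuous_circlePoint a b).continuousAt.eventually_mem
      (hC.mem_nhds (by simpa [circlePoint] using hab))
  obtain ⟨α, ⟨hα, hα'⟩, harc⟩ := (mem_nhdsGE_iff_exists_mem_Ioc_Ico_subset two_pi_pos).mp hC0
  exact ⟨α / 2, ⟨by positivity, by linarith⟩,
    fun θ hθ => harc ⟨hθ.1, hθ.2.trans_lt (half_lt_self hα)⟩⟩

theorem toReal_sup_coe_le {x : EReal} {c A : ℝ} (hx : x ≤ A) (hc : c ≤ A) :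
    (x ⊔ (c : EReal)).toReal ≤ A :=
  EReal.toReal_le_toReal (sup_le hx (EReal.coe_le_coe hc))
    (ne_bot_of_le_ne_bot (EReal.coe_ne_bot c) le_sup_right) (EReal.coe_ne_top A)

theorem le_toReal_sup_coe {x : EReal} (hx : x ≠ ⊤) (c : ℝ) : c ≤ (x ⊔ (c : EReal)).toReal :=
  EReal.toReal_le_toReal le_sup_right (EReal.coe_ne_bot c)
    (max_lt hx.lt_top (EReal.coe_lt_top c)).ne

variable {n : ℕ} {Ω : Set (EuclideanSpace ℂ (Fin n))} {u : EuclideanSpace ℂ (Fin n) → EReal}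

theorem circleMean_le_of_le {a b : EuclideanSpace ℂ (Fin n)} {g : ℝ → ℝ}
    (hu : Measurable fun θ => u (circlePoint a b θ)) (hg : IntervalIntegrable g volume 0 (2 * π))
    (hbdd : BddBelow (g '' Set.Icc 0 (2 * π)))
    (hug : ∀ θ ∈ Set.Icc 0 (2 * π), u (circlePoint a b θ) ≤ g θ) :
    circleMean u a b ≤ (((2 * π)⁻¹ * ∫ θ in (0 : ℝ)..(2 * π), g θ : ℝ) : EReal) := by
  obtain ⟨c, hc⟩ := hbdd
  obtain ⟨m, hm⟩ := exists_nat_ge (-c)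
  have hmg : ∀ θ ∈ Set.Icc 0 (2 * π), -(m : ℝ) ≤ g θ := fun θ hθ =>
    (neg_le.mp hm).trans (hc (Set.mem_image_of_mem g hθ))
  set t : ℝ → ℝ := fun θ => (u (circlePoint a b θ) ⊔ ((-(m : ℝ) : ℝ) : EReal)).toReal
  have htg : ∀ θ ∈ Set.Icc 0 (2 * π), t θ ≤ g θ := fun θ hθ =>
    toReal_sup_coe_le (hug θ hθ) (hmg θ hθ)
  have hmt : ∀ θ ∈ Set.Icc 0 (2 * π), -(m : ℝ) ≤ t θ := fun θ hθ =>
    le_toReal_sup_coe ((hug θ hθ).trans_lt (EReal.coe_lt_top _)).ne _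
  have ht_int : IntervalIntegrable t volume 0 (2 * π) := by
    rw [intervalIntegrable_iff_integrableOn_Icc_of_le two_pi_pos.le] at hg ⊢
    refine integrable_of_le_of_le (hu.sup_const _).ereal_toReal.aestronglyMeasurable
      (ae_restrict_of_forall_mem measurableSet_Icc hmt)
      (ae_restrict_of_forall_mem measurableSet_Icc htg) ?_ hg
    exact integrable_const _
  refine (iInf_le _ m).trans (EReal.coe_le_coe ?_)
  gcongr
  exact intervalIntegral.integral_mono_on two_pi_pos.le ht_int hg htg

theorem coe_average_le_circleMean {v : EuclideanSpace ℂ (Fin n) → ℝ}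
    {a b : EuclideanSpace ℂ (Fin n)} (hv : Continuous fun θ => v (circlePoint a b θ)) :
    (((2 * π)⁻¹ * ∫ θ in (0 : ℝ)..(2 * π), v (circlePoint a b θ) : ℝ) : EReal) ≤
      circleMean (fun z => (v z : EReal)) a b := by
  have htrunc : ∀ (r : ℝ) (m : ℕ), ((r : EReal) ⊔ ((-(m : ℝ) : ℝ) : EReal)).toReal = r ⊔ -m :=
    fun r m => by rw [← EReal.coe_strictMono.monotone.map_sup, EReal.toReal_coe]
  refine le_iInf fun m => EReal.coe_le_coe ?_
  simp only [htrunc]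
  gcongr
  exact intervalIntegral.integral_mono_on two_pi_pos.le (hv.intervalIntegrable _ _)
    ((hv.sup continuous_const).intervalIntegrable _ _) fun _ _ => le_sup_left

theorem isPSHOn_coe_of_continuousOn {v : EuclideanSpace ℂ (Fin n) → ℝ} (hv : ContinuousOn v Ω)
    (hmean : ∀ a b : EuclideanSpace ℂ (Fin n), (∀ l : ℂ, ‖l‖ ≤ 1 → a + l • b ∈ Ω) →
      v a ≤ (2 * π)⁻¹ * ∫ θ in (0 : ℝ)..(2 * π), v (circlePoint a b θ)) :
    IsPSHOn Ω (fun z => (v z : EReal)) := by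
  refine ⟨(continuous_coe_real_ereal.comp_continuousOn hv).upperSemicontinuousOn,
    fun z _ => EReal.coe_ne_top _,
    fun z hz => ⟨z, mem_connectedComponentIn hz, EReal.coe_ne_bot _⟩, fun a b hab => ?_⟩
  exact (EReal.coe_le_coe (hmean a b hab)).trans <| coe_average_le_circleMean <|
    hv.comp_continuous (continuous_circlePoint a b) (circlePoint_mem_of_disc_subset hab)

namespace IsPSHOn

theorem le_average (hu : IsPSHOn Ω u) {a b : EuclideanSpace ℂ (Fin n)}
    (hab : ∀ l : ℂ, ‖l‖ ≤ 1 → a + l • b ∈ Ω) {g : ℝ → ℝ}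
    (hg : IntervalIntegrable g volume 0 (2 * π)) (hbdd : BddBelow (g '' Set.Icc 0 (2 * π)))
    (hug : ∀ θ ∈ Set.Icc 0 (2 * π), u (circlePoint a b θ) ≤ g θ) :
    u a ≤ (((2 * π)⁻¹ * ∫ θ in (0 : ℝ)..(2 * π), g θ : ℝ) : EReal) := by
  have husc : UpperSemicontinuous fun θ => u (circlePoint a b θ) :=
    upperSemicontinuousOn_univ_iff.mp <| hu.1.comp (continuous_circlePoint a b).continuousOn
      fun θ _ => circlePoint_mem_of_disc_subset hab θ
  exact (hu.2.2.2 a b hab).trans (circleMean_le_of_le husc.measurable hg hbdd hug)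

theorem le_of_le_on_arc (hu : IsPSHOn Ω u) {a b : EuclideanSpace ℂ (Fin n)}
    (hab : ∀ l : ℂ, ‖l‖ ≤ 1 → a + l • b ∈ Ω) {α A N : ℝ} (hα : α ∈ Set.Icc 0 (2 * π))
    (hA : ∀ θ ∈ Set.Icc 0 α, u (circlePoint a b θ) ≤ A)
    (hN : ∀ θ, u (circlePoint a b θ) ≤ N) :
    u a ≤ ((N + α / (2 * π) * (A - N) : ℝ) : EReal) := by
  set h : ℝ → ℝ := {θ | θ ≤ α}.indicator fun _ => A - N with hh
  have h_int : IntervalIntegrable h volume 0 (2 * π) :=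
    intervalIntegrable_iff.mpr (intervalIntegrable_const.def'.indicator measurableSet_Iic)
  have hbdd : BddBelow ((fun θ => N + h θ) '' Set.Icc 0 (2 * π)) := by
    refine ⟨N + min 0 (A - N), Set.forall_mem_image.mpr fun θ _ => ?_⟩
    gcongr
    by_cases hθ : θ ≤ α <;> simp [hh, hθ]
  have hle : ∀ θ ∈ Set.Icc 0 (2 * π), u (circlePoint a b θ) ≤ ((N + h θ : ℝ) : EReal) := by
    intro θ hθ
    by_cases hθα : θ ≤ α
    · simpa [hh, hθα] using hA θ ⟨hθ.1, hθα⟩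
    · simpa [hh, hθα] using hN θ
  have havg : (2 * π)⁻¹ * ∫ θ in (0 : ℝ)..(2 * π), (N + h θ) = N + α / (2 * π) * (A - N) := by
    rw [intervalIntegral.integral_add intervalIntegrable_const h_int,
      intervalIntegral.integral_indicator hα]
    simp only [intervalIntegral.integral_const, sub_zero, smul_eq_mul]
    field_simp
  exact havg ▸ hu.le_average hab (intervalIntegrable_const.add h_int) hbdd hle

theorem exists_ball_lt (hΩ : IsOpen Ω) (hu : IsPSHOn Ω u) {z : EuclideanSpace ℂ (Fin n)}
    (hz : z ∈ Ω) {c : EReal} (hc : u z < c) : ∃ r > 0, ∀ y ∈ ball z r, y ∈ Ω ∧ u y < c := by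
  have hev : ∀ᶠ y in 𝓝 z, u y < c := by simpa [hΩ.nhdsWithin_eq hz] using hu.1 z hz c hc
  exact Metric.eventually_nhds_iff_ball.mp ((hΩ.eventually_mem hz).and hev)

theorem exists_le_combo_of_mem_closure (hΩ : IsOpen Ω) (hu : IsPSHOn Ω u)
    {C : Set (EuclideanSpace ℂ (Fin n))} (hC : IsOpen C) (hconv : Convex ℝ C)
    {q : EuclideanSpace ℂ (Fin n)} (hq : q ∈ Ω) (hqC : q ∈ closure C) :
    ∃ β > 0, ∀ A N : ℝ, (∀ y ∈ C, u y ≤ A) → u q < N → u q ≤ ((N + β * (A - N) : ℝ) : EReal) := by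
  obtain ⟨e, he⟩ : C.Nonempty := closure_nonempty_iff.mp ⟨q, hqC⟩
  obtain ⟨α, hα, harc⟩ := exists_arc_circlePoint_mem (a := q) (b := e - q) hC (by simpa)
  refine ⟨α / (2 * π), div_pos hα.1 two_pi_pos, fun A N hA hN => ?_⟩
  obtain ⟨r, hr, hball⟩ := exists_ball_lt hΩ hu hq hN
  obtain ⟨t, ⟨ht0, ht1⟩, htr⟩ : ∃ t ∈ Set.Ioo (0 : ℝ) 1, t * ‖e - q‖ < r := by
    have hlim : Tendsto (fun t : ℝ => t * ‖e - q‖) (𝓝[>] 0) (𝓝 0) :=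
      ((continuous_mul_const _).tendsto' 0 0 (zero_mul _)).mono_left nhdsWithin_le_nhds
    exact (Filter.Eventually.and (Ioo_mem_nhdsGT one_pos) (hlim.eventually_lt_const hr)).exists
  have hdisc : ∀ l : ℂ, ‖l‖ ≤ 1 → q + l • t • (e - q) ∈ ball q r := fun l hl =>
    add_smul_mem_ball (by simpa [norm_smul, abs_of_pos ht0] using htr) hl
  -- Shrinking the disc towards `q` keeps the arc in `C`, so the weight of the arc does not change.
  have hshrink : ∀ θ ∈ Set.Icc 0 α, circlePoint q (t • (e - q)) θ ∈ C := fun θ hθ => by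
    have hmem := hconv.openSegment_closure_interior_subset_interior hqC
      (hC.interior_eq.symm ▸ harc θ hθ)
      (lineMap_mem_openSegment ℝ q (circlePoint q (e - q) θ) ⟨ht0, ht1⟩)
    rw [hC.interior_eq] at hmem
    simpa [circlePoint, AffineMap.lineMap_apply, smul_comm t, add_comm] using hmem
  exact le_of_le_on_arc hu (fun l hl => (hball _ (hdisc l hl)).1) (Set.Ioc_subset_Icc_self hα)
    (fun θ hθ => hA _ (hshrink θ hθ))
    fun θ => (hball _ (circlePoint_mem_of_disc_subset hdisc θ)).2.le

/-- Open convex sets are not thin at the points of their closure. -/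
theorem le_of_mem_closure_of_convex (hΩ : IsOpen Ω) (hu : IsPSHOn Ω u)
    {C : Set (EuclideanSpace ℂ (Fin n))} (hC : IsOpen C) (hconv : Convex ℝ C)
    {q : EuclideanSpace ℂ (Fin n)} (hq : q ∈ Ω) (hqC : q ∈ closure C)
    {M : EReal} (hM : ∀ y ∈ C, u y ≤ M) : u q ≤ M := by
  obtain ⟨β, hβ, hcombo⟩ := exists_le_combo_of_mem_closure hΩ hu hC hconv hq hqC
  by_contra! hlt
  obtain ⟨A, hMA, hAq⟩ := EReal.lt_iff_exists_real_btwn.mp hlt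
  lift u q to ℝ using ⟨hu.2.1 q hq, ne_bot_of_gt hAq⟩ with x
  have hx : ∀ᶠ N in 𝓝[>] x, x ≤ N + β * (A - N) := by
    filter_upwards [self_mem_nhdsWithin] with N hN
    exact_mod_cast hcombo A N (fun y hy => (hM y hy).trans hMA.le) (EReal.coe_lt_coe_iff.mpr hN)
  have hlim : Tendsto (fun N => N + β * (A - N)) (𝓝[>] x) (𝓝 (x + β * (A - x))) :=
    (by fun_prop : Continuous fun N => N + β * (A - N)).continuousWithinAt
  have hxA : A < x := EReal.coe_lt_coe_iff.mp hAq
  nlinarith [ge_of_tendsto hlim hx]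

theorem eq_bot_of_disc_inter_interior (hu : IsPSHOn Ω u) {a b : EuclideanSpace ℂ (Fin n)}
    (hab : ∀ l : ℂ, ‖l‖ ≤ 1 → a + l • b ∈ Ω) {N : ℝ} (hN : ∀ θ, u (circlePoint a b θ) ≤ N)
    (hbot : a + b ∈ interior {y | u y = ⊥}) : u a = ⊥ := by
  obtain ⟨α, hα, harc⟩ := exists_arc_circlePoint_mem isOpen_interior hbot
  have hmean : ∀ A : ℝ, u a ≤ ((N + α / (2 * π) * (A - N) : ℝ) : EReal) := fun A =>
    hu.le_of_le_on_arc hab (Set.Ioc_subset_Icc_self hα)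
      (fun θ hθ => (interior_subset (harc θ hθ)).trans_le bot_le) hN
  refine EReal.eq_bot_iff_forall_lt _ |>.mpr fun y =>
    (hmean (N + (y - 1 - N) / (α / (2 * π)))).trans_lt (EReal.coe_lt_coe_iff.mpr ?_)
  have hβ : α / (2 * π) ≠ 0 := (div_pos hα.1 two_pi_pos).ne'
  rw [add_sub_cancel_left, mul_div_cancel₀ _ hβ]
  linarith

theorem closure_interior_eq_bot_inter_subset (hΩ : IsOpen Ω) (hu : IsPSHOn Ω u) :
    closure (interior {y | u y = ⊥}) ∩ Ω ⊆ interior {y | u y = ⊥} := by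
  rintro q ⟨hq, hqΩ⟩
  obtain ⟨N, hN, -⟩ := EReal.lt_iff_exists_real_btwn.mp (hu.2.1 q hqΩ).lt_top
  obtain ⟨r, hr, hball⟩ := hu.exists_ball_lt hΩ hqΩ hN
  obtain ⟨e, he, hqe⟩ := Metric.mem_closure_iff.mp hq (r / 4) (by positivity)
  refine interior_maximal (fun p hp => ?_) isOpen_ball (mem_ball_self (x := q) (ε := r / 4)
    (by positivity))
  have hpe : dist p q + ‖e - p‖ < r := by
    rw [mem_ball] at hp
    rw [← dist_eq_norm]
    linarith [dist_triangle_right e p q, dist_comm e q]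
  have hdisc : ∀ l : ℂ, ‖l‖ ≤ 1 → p + l • (e - p) ∈ ball q r := fun l hl =>
    add_smul_mem_ball hpe hl
  exact hu.eq_bot_of_disc_inter_interior (fun l hl => (hball _ (hdisc l hl)).1)
    (fun θ => (hball _ (circlePoint_mem_of_disc_subset hdisc θ)).2.le) (by simpa using he)

theorem exists_ne_bot_of_isOpen (hΩ : IsOpen Ω) (hconn : IsPreconnected Ω) (hu : IsPSHOn Ω u)
    {C : Set (EuclideanSpace ℂ (Fin n))} (hC : IsOpen C) (hne : C.Nonempty) (hCΩ : C ⊆ Ω) :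
    ∃ y ∈ C, u y ≠ ⊥ := by
  by_contra! hbot
  obtain ⟨z, hz⟩ := hne
  have hsub : Ω ⊆ interior {y | u y = ⊥} :=
    hconn.subset_of_closure_inter_subset isOpen_interior
      ⟨z, hCΩ hz, interior_maximal hbot hC hz⟩ (hu.closure_interior_eq_bot_inter_subset hΩ)
  obtain ⟨w, hw, hw_ne⟩ := hu.2.2.1 z (hCΩ hz)
  exact hw_ne (interior_subset (s := {y | u y = ⊥}) (hsub (connectedComponentIn_subset _ _ hw)))

end IsPSHOn

end SubMeanValue

section Cone

variable {E : Type*} [AddCommGroup E] [Module ℝ E]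

/-- The set of points dividing a segment from the apex `z` to a point of the base `B` in a ratio
`s ∈ I`: `s = 0` gives the apex and `s = 1` the base. -/
def coneOver (I : Set ℝ) (B : Set E) (z : E) : Set E :=
  Set.image2 (fun s x => AffineMap.lineMap z x s) I B

variable {I : Set ℝ} {B : Set E} {z : E}

theorem convex_coneOver (hI : Convex ℝ I) (hI₀ : ∀ s ∈ I, 0 ≤ s) (hB : Convex ℝ B) (z : E) :
    Convex ℝ (coneOver I B z) := by
  rintro _ ⟨s, hs, x, hx, rfl⟩ _ ⟨t, ht, y, hy, rfl⟩ a b ha hb hab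
  obtain ⟨p, hp, hpxy⟩ := hB.exists_mem_add_smul_eq hx hy (mul_nonneg ha (hI₀ s hs))
    (mul_nonneg hb (hI₀ t ht))
  refine ⟨a * s + b * t, hI hs ht ha hb hab, p, hp, ?_⟩
  simp only [AffineMap.lineMap_apply_module, hpxy]
  rw [show 1 - (a * s + b * t) = a * (1 - s) + b * (1 - t) by linear_combination -hab]
  module

theorem coneOver_subset_of_starConvex {Ω : Set E} (hI : I ⊆ Set.Icc 0 1)
    (hB : ∀ x ∈ B, StarConvex ℝ x Ω) (hz : z ∈ Ω) : coneOver I B z ⊆ Ω := by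
  rintro _ ⟨s, hs, x, hx, rfl⟩
  exact (hB x hx).segment_subset hz (segment_symm ℝ z x ▸ lineMap_mem_segment ℝ z x (hI hs))

/-- The regularization of `u` by suprema over the cones `coneOver I B z`. -/
def coneSup {β : Type*} [CompleteLattice β] (u : E → β) (I : Set ℝ) (B : Set E) (z : E) : β :=
  ⨆ y ∈ coneOver I B z, u y

theorem coneSup_mono {β : Type*} [CompleteLattice β] (u : E → β) {J : Set ℝ} (hIJ : I ⊆ J)
    (B : Set E) (z : E) : coneSup u I B z ≤ coneSup u J B z :=
  biSup_mono fun _ hy => Set.image2_subset_right hIJ hy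

variable [TopologicalSpace E] [IsTopologicalAddGroup E] [ContinuousSMul ℝ E]

theorem isCompact_coneOver (hI : IsCompact I) (hB : IsCompact B) (z : E) :
    IsCompact (coneOver I B z) := by
  rw [coneOver, ← Set.image_prod]
  exact (hI.prod hB).image (by fun_prop)

theorem coneOver_closure_subset_closure (I : Set ℝ) (B : Set E) (z : E) :
    coneOver (closure I) (closure B) z ⊆ closure (coneOver I B z) :=
  Set.image2_subset_iff.mpr fun _ hs _ hx =>
    map_mem_closure₂ (f := fun s x => AffineMap.lineMap z x s) (by fun_prop) hs hx
      fun _ hs _ hx => Set.mem_image2_of_mem hs hx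

theorem isOpen_setOf_mem_coneOver (hI : 0 ∉ I) (hB : IsOpen B) :
    IsOpen {p : E × E | p.2 ∈ coneOver I B p.1} := by
  have hunion : {p : E × E | p.2 ∈ coneOver I B p.1} =
      ⋃ s ∈ I, (fun p : E × E => AffineMap.lineMap p.1 p.2 s⁻¹) ⁻¹' B := by
    ext ⟨z, y⟩
    simp only [Set.mem_iUnion₂, Set.mem_preimage, exists_prop]
    constructor
    · rintro ⟨s, hs, x, hx, hxy : AffineMap.lineMap z x s = y⟩
      exact ⟨s, hs, by simpa [← hxy, ne_of_mem_of_not_mem hs hI] using hx⟩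
    · rintro ⟨s, hs, hx⟩
      exact ⟨s, hs, _, hx, by simp [ne_of_mem_of_not_mem hs hI]⟩
  exact hunion ▸ isOpen_biUnion fun s _ => hB.preimage (by fun_prop)

theorem isOpen_coneOver (hI : 0 ∉ I) (hB : IsOpen B) (z : E) : IsOpen (coneOver I B z) :=
  (isOpen_setOf_mem_coneOver hI hB).preimage (Continuous.prodMk_right z)

theorem lowerSemicontinuous_coneSup {β : Type*} [CompleteLinearOrder β] (u : E → β)
    (hI : 0 ∉ I) (hB : IsOpen B) : LowerSemicontinuous (coneSup u I B) := by
  intro z c hc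
  obtain ⟨y, hy, hcy⟩ := lt_biSup_iff.mp hc
  have hopen : IsOpen {z | y ∈ coneOver I B z} :=
    (isOpen_setOf_mem_coneOver hI hB).preimage (Continuous.prodMk_left y)
  filter_upwards [hopen.mem_nhds hy] with z' hz'
  exact hcy.trans_le (le_biSup u hz')

theorem eventually_forall_lt_of_isCompact {X Y Z β : Type*} [TopologicalSpace X]
    [TopologicalSpace Y] [TopologicalSpace Z] [Preorder β] {f : Z → β} {Ω : Set Z}
    (hΩ : IsOpen Ω) (hf : UpperSemicontinuousOn f Ω) {K : Set Y} (hK : IsCompact K)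
    {φ : X → Y → Z} (hφ : Continuous (Function.uncurry φ)) {x₀ : X} {c : β}
    (hΩφ : ∀ y ∈ K, φ x₀ y ∈ Ω) (hlt : ∀ y ∈ K, f (φ x₀ y) < c) :
    ∀ᶠ x in 𝓝 x₀, ∀ y ∈ K, f (φ x y) < c := by
  refine hK.eventually_forall_of_forall_eventually fun y hy => ?_
  have hev : ∀ᶠ z in 𝓝 (φ x₀ y), f z < c := by
    simpa [hΩ.nhdsWithin_eq (hΩφ y hy)] using hf _ (hΩφ y hy) c (hlt y hy)
  have hlim : Tendsto (fun q : X × Y => φ q.1 q.2) (𝓝 (x₀, y)) (𝓝 (φ x₀ y)) := hφ.tendsto (x₀, y)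
  exact hlim.eventually hev

theorem eventually_coneSup_le {β : Type*} [CompleteLattice β] {u : E → β} {Ω : Set E}
    (hΩ : IsOpen Ω) (hu : UpperSemicontinuousOn u Ω) (hI : IsCompact (closure I))
    (hB : IsCompact (closure B)) (hz : coneOver (closure I) (closure B) z ⊆ Ω) {c : β}
    (hc : ∀ y ∈ coneOver (closure I) (closure B) z, u y < c) :
    ∀ᶠ z' in 𝓝 z, coneSup u I B z' ≤ c := by
  have hev := eventually_forall_lt_of_isCompact hΩ hu (hI.prod hB)
    (φ := fun z' p => AffineMap.lineMap z' p.2 p.1) (by fun_prop)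
    (fun p hp => hz (Set.mem_image2_of_mem hp.1 hp.2))
    (fun p hp => hc _ (Set.mem_image2_of_mem hp.1 hp.2))
  filter_upwards [hev] with z' hz'
  refine iSup₂_le ?_
  rintro _ ⟨s, hs, x, hx, rfl⟩
  exact (hz' (s, x) ⟨subset_closure hs, subset_closure hx⟩).le

theorem eventually_coneSup_Ioo_le {β : Type*} [CompleteLattice β] {u : E → β} {Ω : Set E}
    (hΩ : IsOpen Ω) (hu : UpperSemicontinuousOn u Ω) (hB : IsCompact (closure B)) (hz : z ∈ Ω)
    {c : β} (hc : u z < c) : ∀ᶠ ε in 𝓝[>] (0 : ℝ), coneSup u (Set.Ioo 0 ε) B z ≤ c := by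
  have hev := eventually_forall_lt_of_isCompact hΩ hu hB (x₀ := (0 : ℝ))
    (φ := fun s x => AffineMap.lineMap z x s) (by fun_prop) (by simpa using fun _ _ => hz)
    (by simpa using fun _ _ => hc)
  obtain ⟨δ, hδ, hlt⟩ := mem_nhdsGT_iff_exists_Ioo_subset.mp (nhdsWithin_le_nhds hev)
  filter_upwards [Ioo_mem_nhdsGT hδ] with ε hε
  refine iSup₂_le ?_
  rintro _ ⟨s, hs, x, hx, rfl⟩
  exact (hlt ⟨hs.1, hs.2.trans hε.2⟩ x (subset_closure hx)).le

end Cone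

section ConeRegularization

/-- `B` is a nonempty bounded open convex set with respect to every point of whose closure `Ω`
is star-shaped, so that all cones over `B` with apex in `Ω` stay inside `Ω`. -/
structure IsStarCore {E : Type*} [NormedAddCommGroup E] [NormedSpace ℝ E] (B Ω : Set E) :
    Prop where
  isOpen : IsOpen B
  nonempty : B.Nonempty
  convex : Convex ℝ B
  isBounded : Bornology.IsBounded B
  starConvex : ∀ x ∈ closure B, StarConvex ℝ x Ω

namespace IsStarCore

variable {E : Type*} [NormedAddCommGroup E] [NormedSpace ℝ E] {B Ω : Set E}

theorem isPreconnected (h : IsStarCore B Ω) (hΩ : Ω.Nonempty) : IsPreconnected Ω := by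
  obtain ⟨x, hx⟩ := h.nonempty
  have hstar := h.starConvex x (subset_closure hx)
  exact (hstar.isPathConnected (hstar.mem hΩ)).isConnected.isPreconnected

theorem coneOver_closure_subset (h : IsStarCore B Ω) {ε : ℝ} (hε : ε ∈ Set.Ioc 0 1) {z : E}
    (hz : z ∈ Ω) : coneOver (closure (Set.Ioo 0 ε)) (closure B) z ⊆ Ω := by
  rw [closure_Ioo hε.1.ne]
  exact coneOver_subset_of_starConvex (Set.Icc_subset_Icc_right hε.2) h.starConvex hz

theorem coneOver_subset (h : IsStarCore B Ω) {ε : ℝ} (hε : ε ∈ Set.Ioc 0 1) {z : E}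
    (hz : z ∈ Ω) : coneOver (Set.Ioo 0 ε) B z ⊆ Ω :=
  (Set.image2_subset subset_closure subset_closure).trans (h.coneOver_closure_subset hε hz)

theorem isOpen_coneOver (h : IsStarCore B Ω) (ε : ℝ) (z : E) :
    IsOpen (coneOver (Set.Ioo 0 ε) B z) :=
  _root_.isOpen_coneOver Set.left_notMem_Ioo h.isOpen z

theorem convex_coneOver (h : IsStarCore B Ω) (ε : ℝ) (z : E) :
    Convex ℝ (coneOver (Set.Ioo 0 ε) B z) :=
  _root_.convex_coneOver (convex_Ioo 0 ε) (fun _ hs => hs.1.le) h.convex z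

theorem coneOver_nonempty (h : IsStarCore B Ω) {ε : ℝ} (hε : 0 < ε) (z : E) :
    (coneOver (Set.Ioo 0 ε) B z).Nonempty :=
  (Set.nonempty_Ioo.mpr hε).image2 h.nonempty

end IsStarCore

/-- `u` is, on `Ω`, the pointwise limit of a decreasing sequence of continuous plurisubharmonic
functions. -/
def HasContinuousPSHApprox {n : ℕ} (Ω : Set (EuclideanSpace ℂ (Fin n)))
    (u : EuclideanSpace ℂ (Fin n) → EReal) : Prop :=
  ∃ v : ℕ → EuclideanSpace ℂ (Fin n) → ℝ,
    (∀ k, ContinuousOn (v k) Ω) ∧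
    (∀ k, IsPSHOn Ω (fun z => ((v k z : ℝ) : EReal))) ∧
    (∀ k, ∀ z ∈ Ω, v (k + 1) z ≤ v k z) ∧
    (∀ z ∈ Ω, Tendsto (fun k => ((v k z : ℝ) : EReal)) atTop (nhds (u z)))

namespace IsPSHOn

variable {n : ℕ} {Ω B : Set (EuclideanSpace ℂ (Fin n))} {u : EuclideanSpace ℂ (Fin n) → EReal}
  {ε : ℝ} {z : EuclideanSpace ℂ (Fin n)}

theorem le_coneSup_of_mem (hΩ : IsOpen Ω) (hu : IsPSHOn Ω u) (hB : IsStarCore B Ω)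
    (hε : ε ∈ Set.Ioc 0 1) (hz : z ∈ Ω) {y : EuclideanSpace ℂ (Fin n)}
    (hy : y ∈ coneOver (closure (Set.Ioo 0 ε)) (closure B) z) :
    u y ≤ coneSup u (Set.Ioo 0 ε) B z :=
  le_of_mem_closure_of_convex hΩ hu (hB.isOpen_coneOver ε z) (hB.convex_coneOver ε z)
    (hB.coneOver_closure_subset hε hz hy) (coneOver_closure_subset_closure _ _ _ hy)
    fun _ hx => le_biSup u hx

theorem le_coneSup (hΩ : IsOpen Ω) (hu : IsPSHOn Ω u) (hB : IsStarCore B Ω)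
    (hε : ε ∈ Set.Ioc 0 1) (hz : z ∈ Ω) : u z ≤ coneSup u (Set.Ioo 0 ε) B z := by
  obtain ⟨x, hx⟩ := hB.nonempty
  refine le_coneSup_of_mem hΩ hu hB hε hz ⟨0, ?_, x, subset_closure hx, by simp⟩
  simpa [closure_Ioo hε.1.ne] using hε.1.le

theorem coneSup_ne_top (hu : IsPSHOn Ω u) (hB : IsStarCore B Ω) (hε : ε ∈ Set.Ioc 0 1)
    (hz : z ∈ Ω) : coneSup u (Set.Ioo 0 ε) B z ≠ ⊤ := by
  have hsub := hB.coneOver_closure_subset hε hz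
  have hle := Set.image2_subset (f := fun s x => AffineMap.lineMap z x s)
    (subset_closure (s := Set.Ioo 0 ε)) (subset_closure (s := B))
  obtain ⟨y, hy, hmax⟩ := (hu.1.mono hsub).exists_isMaxOn
    ((hB.coneOver_nonempty hε.1 z).mono hle)
    (isCompact_coneOver (isBounded_Ioo 0 ε).isCompact_closure hB.isBounded.isCompact_closure z)
  exact ne_top_of_le_ne_top (hu.2.1 y (hsub hy)) (iSup₂_le fun x hx => hmax (hle hx))

theorem coneSup_ne_bot (hΩ : IsOpen Ω) (hu : IsPSHOn Ω u) (hB : IsStarCore B Ω)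
    (hε : ε ∈ Set.Ioc 0 1) (hz : z ∈ Ω) : coneSup u (Set.Ioo 0 ε) B z ≠ ⊥ := by
  obtain ⟨y, hy, hy_ne⟩ := hu.exists_ne_bot_of_isOpen hΩ (hB.isPreconnected ⟨z, hz⟩)
    (hB.isOpen_coneOver ε z) (hB.coneOver_nonempty hε.1 z) (hB.coneOver_subset hε hz)
  exact ne_bot_of_le_ne_bot hy_ne (le_biSup u hy)

theorem coe_toReal_coneSup (hΩ : IsOpen Ω) (hu : IsPSHOn Ω u) (hB : IsStarCore B Ω)
    (hε : ε ∈ Set.Ioc 0 1) (hz : z ∈ Ω) :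
    ((coneSup u (Set.Ioo 0 ε) B z).toReal : EReal) = coneSup u (Set.Ioo 0 ε) B z :=
  EReal.coe_toReal (coneSup_ne_top hu hB hε hz) (coneSup_ne_bot hΩ hu hB hε hz)

theorem continuousOn_coneSup (hΩ : IsOpen Ω) (hu : IsPSHOn Ω u) (hB : IsStarCore B Ω)
    (hε : ε ∈ Set.Ioc 0 1) : ContinuousOn (coneSup u (Set.Ioo 0 ε) B) Ω := by
  intro z hz
  refine ContinuousAt.continuousWithinAt (tendsto_order.mpr ⟨fun c hc => ?_, fun c hc => ?_⟩)
  · exact lowerSemicontinuous_coneSup u Set.left_notMem_Ioo hB.isOpen z c hc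
  · obtain ⟨c', hc', hc'c⟩ := exists_between hc
    have hle : ∀ᶠ z' in 𝓝 z, coneSup u (Set.Ioo 0 ε) B z' ≤ c' :=
      eventually_coneSup_le hΩ hu.1 (isBounded_Ioo 0 ε).isCompact_closure
        hB.isBounded.isCompact_closure (hB.coneOver_closure_subset hε hz)
        fun y hy => (le_coneSup_of_mem hΩ hu hB hε hz hy).trans_lt hc'
    exact hle.mono fun z' hz' => hz'.trans_lt hc'c

theorem continuousOn_toReal_coneSup (hΩ : IsOpen Ω) (hu : IsPSHOn Ω u) (hB : IsStarCore B Ω)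
    (hε : ε ∈ Set.Ioc 0 1) :
    ContinuousOn (fun z => (coneSup u (Set.Ioo 0 ε) B z).toReal) Ω := fun z hz =>
  (EReal.tendsto_toReal (coneSup_ne_top hu hB hε hz)
    (coneSup_ne_bot hΩ hu hB hε hz)).comp (continuousOn_coneSup hΩ hu hB hε z hz)

theorem isPSHOn_toReal_coneSup (hΩ : IsOpen Ω) (hu : IsPSHOn Ω u) (hB : IsStarCore B Ω)
    (hε : ε ∈ Set.Ioc 0 1) :
    IsPSHOn Ω (fun z => ((coneSup u (Set.Ioo 0 ε) B z).toReal : EReal)) := by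
  have hv := continuousOn_toReal_coneSup hΩ hu hB hε
  refine isPSHOn_coe_of_continuousOn hv fun a b hab => ?_
  have hcircle := hv.comp_continuous (continuous_circlePoint a b)
    (circlePoint_mem_of_disc_subset hab)
  have ha : a ∈ Ω := by simpa using hab 0 (by simp)
  rw [← EReal.coe_le_coe_iff, coe_toReal_coneSup hΩ hu hB hε ha]
  refine iSup₂_le ?_
  rintro _ ⟨s, hs, x, hx, rfl⟩
  have hmem : ∀ z, AffineMap.lineMap z x s ∈ coneOver (Set.Ioo 0 ε) B z := fun z =>
    Set.mem_image2_of_mem hs hx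
  refine hu.le_average (b := (1 - s) • b) (fun l hl => ?_) (hcircle.intervalIntegrable _ _)
    (isCompact_Icc.image hcircle).bddBelow fun θ _ => ?_
  · rw [lineMap_add_smul]
    exact hB.coneOver_subset hε (hab l hl) (hmem _)
  · rw [coe_toReal_coneSup hΩ hu hB hε (circlePoint_mem_of_disc_subset hab θ), circlePoint,
      lineMap_add_smul]
    exact le_biSup u (hmem _)

theorem tendsto_coneSup (hΩ : IsOpen Ω) (hu : IsPSHOn Ω u) (hB : IsStarCore B Ω) (hz : z ∈ Ω) :
    Tendsto (fun ε => coneSup u (Set.Ioo 0 ε) B z) (𝓝[>] 0) (𝓝 (u z)) := by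
  refine tendsto_order.mpr ⟨fun c hc => ?_, fun c hc => ?_⟩
  · filter_upwards [Ioc_mem_nhdsGT one_pos] with ε hε
    exact hc.trans_le (le_coneSup hΩ hu hB hε hz)
  · obtain ⟨c', hc', hc'c⟩ := exists_between hc
    have hle := eventually_coneSup_Ioo_le hΩ hu.1 hB.isBounded.isCompact_closure hz hc'
    exact hle.mono fun ε hε => hε.trans_lt hc'c

theorem hasContinuousPSHApprox_of_isStarCore (hΩ : IsOpen Ω) (hu : IsPSHOn Ω u)
    (hB : IsStarCore B Ω) : HasContinuousPSHApprox Ω u := by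
  set ε : ℕ → ℝ := fun k => 1 / (k + 1)
  have hε : ∀ k, ε k ∈ Set.Ioc 0 1 := fun k =>
    ⟨Nat.one_div_pos_of_nat, div_le_one_of_le₀ (by simp) (by positivity)⟩
  have hε_lim : Tendsto ε atTop (𝓝[>] 0) :=
    tendsto_nhdsWithin_iff.mpr
      ⟨tendsto_one_div_add_atTop_nhds_zero_nat, Eventually.of_forall fun k => (hε k).1⟩
  refine ⟨fun k z => (coneSup u (Set.Ioo 0 (ε k)) B z).toReal,
    fun k => continuousOn_toReal_coneSup hΩ hu hB (hε k),
    fun k => isPSHOn_toReal_coneSup hΩ hu hB (hε k), fun k z hz => ?_, fun z hz => ?_⟩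
  · have hsub : Set.Ioo 0 (ε (k + 1)) ⊆ Set.Ioo 0 (ε k) :=
      Set.Ioo_subset_Ioo_right (Nat.one_div_le_one_div k.le_succ)
    exact EReal.toReal_le_toReal (coneSup_mono u hsub B z)
      (coneSup_ne_bot hΩ hu hB (hε _) hz) (coneSup_ne_top hu hB (hε k) hz)
  · simp only [coe_toReal_coneSup hΩ hu hB (hε _) hz]
    exact (tendsto_coneSup hΩ hu hB hz).comp hε_lim

end IsPSHOn

end ConeRegularization

section LipschitzSubgraph

theorem exists_cylinder_subset {X : Type*} [PseudoMetricSpace X] {x₀ : X} {t₀ : ℝ}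
    {V : Set (X × ℝ)} (hV : V ∈ 𝓝 (x₀, t₀)) (c : ℝ) :
    ∃ r > 0, ∃ δ > 0, c * r < δ ∧ ball x₀ r ×ˢ ball t₀ δ ⊆ V := by
  obtain ⟨δ, hδ, hball⟩ := Metric.mem_nhds_iff.mp hV
  have hlim : Tendsto (fun r : ℝ => c * r) (𝓝[>] 0) (𝓝 0) :=
    ((continuous_const_mul c).tendsto' 0 0 (mul_zero c)).mono_left nhdsWithin_le_nhds
  obtain ⟨r, hr, hcr⟩ :=
    (Filter.Eventually.and (Ioo_mem_nhdsGT hδ) (hlim.eventually_lt_const hδ)).exists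
  refine ⟨r, hr.1, δ, hδ, hcr, (Set.prod_mono_left (ball_subset_ball hr.2.le)).trans ?_⟩
  rwa [ball_prod_same]

variable {X : Type*} [NormedAddCommGroup X] [NormedSpace ℝ X] {F : X → ℝ} {L : NNReal}

theorem segment_subset_subgraph (hF : LipschitzWith L F) {x y : X} {t τ : ℝ} (ht : t < F x)
    (hτ : τ + L * dist x y < F x) : segment ℝ (y, τ) (x, t) ⊆ {q | q.2 < F q.1} := by
  rintro _ ⟨a, b, ha, hb, hab, rfl⟩
  have hdist : dist x (a • y + b • x) = a * dist x y := by
    rw [dist_eq_norm, dist_eq_norm, ← abs_of_nonneg ha, ← Real.norm_eq_abs, ← norm_smul,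
      Real.norm_of_nonneg ha, eq_sub_of_add_eq' hab]
    congr 1
    module
  have hFle : F x ≤ F (a • y + b • x) + L * (a * dist x y) := hdist ▸ hF.le_add_mul x _
  have hpos : 0 < a * (F x - L * dist x y - τ) + b * (F x - t) :=
    convex_Ioi (0 : ℝ) (show 0 < F x - L * dist x y - τ by linarith) (sub_pos.mpr ht) ha hb hab
  change a * τ + b * t < F (a • y + b • x)
  linear_combination hpos + hFle + F x * hab

theorem starConvex_subgraph_inter_cylinder (hF : LipschitzWith L F) {x₀ y : X} {r δ τ : ℝ}
    (hy : y ∈ ball x₀ r) (hτ : τ ∈ Set.Ioo (F x₀ - δ) (F x₀ - 3 * L * r)) :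
    StarConvex ℝ (y, τ) ({q | q.2 < F q.1} ∩ ball x₀ r ×ˢ ball (F x₀) δ) := by
  have hLr : 0 ≤ L * r := mul_nonneg L.coe_nonneg (pos_of_mem_ball hy).le
  have hτδ : τ ∈ ball (F x₀) δ := by
    rw [Real.ball_eq_Ioo]
    exact ⟨hτ.1, by linarith [hτ.1, hτ.2]⟩
  have hconv : Convex ℝ (ball x₀ r ×ˢ ball (F x₀) δ) := (convex_ball _ _).prod (convex_ball _ _)
  refine starConvex_iff_segment_subset.mpr fun ⟨x, t⟩ ⟨ht, hx⟩ => Set.subset_inter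
    (segment_subset_subgraph hF ht ?_) (hconv.segment_subset ⟨hy, hτδ⟩ hx)
  have hx₀x : L * dist x₀ x ≤ L * r :=
    mul_le_mul_of_nonneg_left (mem_ball'.mp hx.1).le L.coe_nonneg
  have hxy : L * dist x y ≤ L * (r + r) :=
    mul_le_mul_of_nonneg_left ((dist_triangle_right x y x₀).trans
      (add_le_add (mem_ball.mp hx.1).le (mem_ball.mp hy).le)) L.coe_nonneg
  linarith [hτ.2, hF.le_add_mul x₀ x]

/-- After an affine change of coordinates identifying `E` with `X × ℝ`, the set `D` agrees near `P`
with the region below the graph of a Lipschitz function. -/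
def IsLipschitzSubgraphAt {E : Type*} [NormedAddCommGroup E] [NormedSpace ℝ E] (X : Type*)
    [NormedAddCommGroup X] [NormedSpace ℝ X] (D : Set E) (P : E) : Prop :=
  ∃ (ψ : E ≃ᴬ[ℝ] X × ℝ) (F : X → ℝ) (L : NNReal), LipschitzWith L F ∧
    ∀ᶠ z in 𝓝 P, (z ∈ D ↔ (ψ z).2 < F (ψ z).1)

theorem eq_of_mem_frontier_of_eventually_iff_lt {E : Type*} [TopologicalSpace E] {D : Set E}
    {P : E} {f g : E → ℝ} (hf : ContinuousAt f P) (hg : ContinuousAt g P) (hP : P ∈ frontier D)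
    (h : ∀ᶠ z in 𝓝 P, (z ∈ D ↔ f z < g z)) : f P = g P := by
  rw [frontier_eq_closure_inter_closure, Set.mem_inter_iff, mem_closure_iff_frequently,
    mem_closure_iff_frequently] at hP
  rcases lt_trichotomy (f P) (g P) with hlt | heq | hgt
  · obtain ⟨z, hzD, hz, hfg⟩ := (hP.2.and_eventually (h.and (hf.eventually_lt hg hlt))).exists
    exact absurd (hz.mpr hfg) hzD
  · exact heq
  · obtain ⟨z, hzD, hz, hgf⟩ := (hP.1.and_eventually (h.and (hg.eventually_lt hf hgt))).exists
    exact absurd (hz.mp hzD) hgf.not_gt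

theorem exists_isStarCore_of_isOpen {E : Type*} [NormedAddCommGroup E] [NormedSpace ℝ E]
    {Ω W : Set E} (hW : IsOpen W) (hne : W.Nonempty) (hstar : ∀ x ∈ W, StarConvex ℝ x Ω) :
    ∃ B, IsStarCore B Ω := by
  obtain ⟨w, hw⟩ := hne
  obtain ⟨ρ, hρ, hsub⟩ := Metric.nhds_basis_closedBall.mem_iff.mp (hW.mem_nhds hw)
  exact ⟨ball w ρ, isOpen_ball, nonempty_ball.mpr hρ, convex_ball w ρ, isBounded_ball,
    fun x hx => hstar x (hsub (closure_ball_subset_closedBall hx))⟩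

theorem IsLipschitzSubgraphAt.exists_isStarCore {E : Type*} [NormedAddCommGroup E]
    [NormedSpace ℝ E] {D : Set E} {P : E} (hD : IsLipschitzSubgraphAt X D P)
    (hP : P ∈ frontier D) :
    ∃ U B, IsOpen U ∧ P ∈ U ∧ IsOpen (D ∩ U) ∧ IsStarCore B (D ∩ U) := by
  obtain ⟨ψ, F, L, hF, hloc⟩ := hD
  have hψP : (ψ P).2 = F (ψ P).1 :=
    eq_of_mem_frontier_of_eventually_iff_lt (by fun_prop)
      (hF.continuous.comp (by fun_prop : Continuous fun z => (ψ z).1)).continuousAt hP hloc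
  have hV : ψ.symm ⁻¹' {z | z ∈ D ↔ (ψ z).2 < F (ψ z).1} ∈ 𝓝 ((ψ P).1, F (ψ P).1) := by
    rw [← hψP]
    exact ψ.symm.continuous.continuousAt.preimage_mem_nhds
      ((ψ.symm_apply_apply P).symm ▸ hloc)
  obtain ⟨r, hr, δ, hδ, hrδ, hsub⟩ := exists_cylinder_subset hV (3 * L)
  set x₀ := (ψ P).1
  have hDU : D ∩ ψ ⁻¹' (ball x₀ r ×ˢ ball (F x₀) δ) =
      ψ ⁻¹' ({q | q.2 < F q.1} ∩ ball x₀ r ×ˢ ball (F x₀) δ) := by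
    ext z
    refine and_congr_left fun hz => ?_
    simpa using hsub hz
  have hcyl : IsOpen (ball x₀ r ×ˢ ball (F x₀) δ) := isOpen_ball.prod isOpen_ball
  have hsubgraph : IsOpen {q : X × ℝ | q.2 < F q.1} :=
    isOpen_lt continuous_snd (hF.continuous.comp continuous_fst)
  obtain ⟨B, hB⟩ := exists_isStarCore_of_isOpen
    (W := ψ ⁻¹' (ball x₀ r ×ˢ Set.Ioo (F x₀ - δ) (F x₀ - 3 * L * r)))
    ((isOpen_ball.prod isOpen_Ioo).preimage ψ.continuous)
    (((nonempty_ball.mpr hr).prod (Set.nonempty_Ioo.mpr (by linarith))).preimage ψ.surjective)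
    fun x hx => (starConvex_subgraph_inter_cylinder hF hx.1 hx.2).affine_preimage
      (ψ : E →ᵃ[ℝ] X × ℝ)
  refine ⟨_, B, hcyl.preimage ψ.continuous, ⟨mem_ball_self hr, hψP ▸ mem_ball_self hδ⟩,
    hDU ▸ (hsubgraph.inter hcyl).preimage ψ.continuous, hDU ▸ hB⟩

end LipschitzSubgraph

theorem HasLipschitzBoundary.isLipschitzSubgraphAt {n : ℕ} {D : Set (EuclideanSpace ℂ (Fin n))}
    (hD : HasLipschitzBoundary D) {P : EuclideanSpace ℂ (Fin n)} (hP : P ∈ frontier D) :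
    IsLipschitzSubgraphAt (EuclideanSpace ℝ (Fin (2 * n - 1))) D P := by
  obtain ⟨φ, F, L, V, hF, hV, hPV, hφ⟩ := hD P hP
  refine ⟨φ.toRealAffineIsometryEquiv.toContinuousAffineEquiv.trans
    (WithLp.prodContinuousLinearEquiv 2 ℝ _ ℝ).toContinuousAffineEquiv, F, L, hF, ?_⟩
  filter_upwards [φ.continuous.continuousAt.eventually_mem (hV.mem_nhds hPV)] with z hz
  simpa using hφ (φ z) hz

theorem continuous_psh_approx_local_at_lipschitz_boundary_general {n : ℕ} {X : Type*}
    [NormedAddCommGroup X] [NormedSpace ℝ X] {D : Set (EuclideanSpace ℂ (Fin n))}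
    {P : EuclideanSpace ℂ (Fin n)} (hP : P ∈ frontier D) (hD : IsLipschitzSubgraphAt X D P) :
    ∃ U : Set (EuclideanSpace ℂ (Fin n)), IsOpen U ∧ P ∈ U ∧
      ∀ u : EuclideanSpace ℂ (Fin n) → EReal, IsPSHOn (D ∩ U) u →
        HasContinuousPSHApprox (D ∩ U) u := by
  obtain ⟨U, B, hU, hPU, hDU, hB⟩ := hD.exists_isStarCore hP
  exact ⟨U, hU, hPU, fun u hu => hu.hasContinuousPSHApprox_of_isStarCore hDU hB⟩

/-- **Theorem 2.** If `D ⊆ ℂⁿ` is a domain with Lipschitz boundary, then every boundary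
point `P` has an open neighbourhood `U` such that every plurisubharmonic function on
`D ∩ U` is the pointwise limit of a decreasing sequence of continuous plurisubharmonic
functions on `D ∩ U`. -/
theorem continuous_psh_approx_local_at_lipschitz_boundary {n : ℕ}
    (D : Set (EuclideanSpace ℂ (Fin n))) (hD_open : IsOpen D) (hD_conn : IsConnected D)
    (hD_lip : HasLipschitzBoundary D) :
    ∀ P ∈ frontier D, ∃ U : Set (EuclideanSpace ℂ (Fin n)),
      IsOpen U ∧ P ∈ U ∧
      ∀ u : EuclideanSpace ℂ (Fin n) → EReal, IsPSHOn (D ∩ U) u →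
        ∃ v : ℕ → EuclideanSpace ℂ (Fin n) → ℝ,
          (∀ k, ContinuousOn (v k) (D ∩ U)) ∧
          (∀ k, IsPSHOn (D ∩ U) (fun z => ((v k z : ℝ) : EReal))) ∧
          (∀ k, ∀ z ∈ D ∩ U, v (k+1) z ≤ v k z) ∧
          (∀ z ∈ D ∩ U, Tendsto (fun k => ((v k z : ℝ) : EReal)) atTop (nhds (u z))) :=
  fun _ hP => continuous_psh_approx_local_at_lipschitz_boundary_general hP
    (hD_lip.isLipschitzSubgraphAt hP)
end
end

section
/- Let $\Omega \subseteq \mathbb{C}^n$ be open, let $\Omega_2 \subseteq \Omega$ be open, let $f : \Omega \to \mathbb{R}$ be continuous, and let $g$ be plurisubharmonic on $\Omega$ with $g \le f$ on $\Omega$. Suppose there is an open set $N \subseteq \Omega$ containing the closure of $\Omega \setminus \Omega_2$ taken in $\Omega$, such that $f = g$ on $N$. Then $P_{\Omega_2}(f|_{\Omega_2})(z) = P_\Omega f(z)$ for every $z \in \Omega_2$. -/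
open MeasureTheory Real Filter Topology Metric

noncomputable section

/-- The plurisubharmonic envelope `P_Ω f = sup {u : u plurisubharmonic on Ω, u ≤ f on Ω}`
(pointwise supremum in `[-∞,∞]`). -/
def pshEnvelope {n : ℕ} (Ω : Set (EuclideanSpace ℂ (Fin n)))
    (f : EuclideanSpace ℂ (Fin n) → ℝ) (z : EuclideanSpace ℂ (Fin n)) : EReal :=
  sSup {t : EReal | ∃ u : EuclideanSpace ℂ (Fin n) → EReal,
    IsPSHOn Ω u ∧ (∀ w ∈ Ω, u w ≤ ((f w : ℝ) : EReal)) ∧ t = u z}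

/-!
Every competitor `u` may be replaced by `max u g`. Near `Ω \ Ω₂` one has `u ≤ f = g`, so for a
competitor `u` on `Ω₂` the function `max u g` agrees with `g` there and extends by `g` to a
competitor on `Ω`. Conversely, if `u` is a competitor on `Ω`, the restriction of `max u g` to `Ω₂`
is one on `Ω₂`: a component of `Ω₂` on which it were `-∞` could not accumulate at `Ω \ Ω₂`, where
`g = f > -∞`, hence would be a whole component of `Ω`.

The extension by gluing is plurisubharmonic because plurisubharmonicity is a local property: an
upper semicontinuous function on the closed disc that satisfies the sub-mean value inequality on
arbitrarily small circles lies below the harmonic majorants of its boundary values, and these can be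
chosen with values at the centre arbitrarily close to the mean of the boundary values, by
approximating first by Lipschitz functions from above and then by trigonometric polynomials.
-/

section LipschitzMajorant

variable {X : Type*} [PseudoMetricSpace X] {h : X → ℝ} {s : Set X} {M : ℝ} {x : X}

/-- The sup-convolution of `h` over `s`, i.e. the least `k`-Lipschitz function on the whole space
that dominates `h` on `s`. It is meaningful when `h` is bounded above on a nonempty `s`; otherwise
the supremum takes a junk value. -/
def lipschitzMajorant (h : X → ℝ) (s : Set X) (k : NNReal) (x : X) : ℝ :=
  ⨆ y : s, (h y - k * dist x y)

theorem bddAbove_range_sub_mul_dist (hb : BddAbove (h '' s)) (k : NNReal) (x : X) :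
    BddAbove (Set.range fun y : s => h y - k * dist x y) := by
  obtain ⟨M, hM⟩ := hb
  refine ⟨M, Set.forall_mem_range.2 fun y => ?_⟩
  have : 0 ≤ k * dist x y := by positivity
  linarith [hM (Set.mem_image_of_mem h y.2)]

theorem le_lipschitzMajorant (hb : BddAbove (h '' s)) (k : NNReal) (hx : x ∈ s) :
    h x ≤ lipschitzMajorant h s k x := by
  calc h x = h x - k * dist x x := by rw [dist_self, mul_zero, sub_zero]
    _ ≤ lipschitzMajorant h s k x := le_ciSup (bddAbove_range_sub_mul_dist hb k x) ⟨x, hx⟩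

theorem lipschitzMajorant_le (hs : s.Nonempty) (hM : ∀ y ∈ s, h y ≤ M) (k : NNReal) (x : X) :
    lipschitzMajorant h s k x ≤ M := by
  have := hs.to_subtype
  refine ciSup_le fun y => ?_
  have : 0 ≤ k * dist x y := by positivity
  linarith [hM y y.2]

theorem lipschitzWith_lipschitzMajorant (hs : s.Nonempty) (hb : BddAbove (h '' s)) (k : NNReal) :
    LipschitzWith k (lipschitzMajorant h s k) := by
  have := hs.to_subtype
  refine LipschitzWith.of_le_add_mul k fun x y => ciSup_le fun w => ?_
  have hw : h w - k * dist y w ≤ lipschitzMajorant h s k y :=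
    le_ciSup (bddAbove_range_sub_mul_dist hb k y) w
  have hdist : k * dist y w ≤ k * (dist x y + dist x w) := by
    gcongr
    exact dist_triangle_left y w x
  linarith

theorem tendsto_lipschitzMajorant (hu : UpperSemicontinuousWithinAt h s x)
    (hb : BddAbove (h '' s)) (hx : x ∈ s) :
    Tendsto (fun k => lipschitzMajorant h s k x) atTop (𝓝 (h x)) := by
  have : Nonempty s := ⟨⟨x, hx⟩⟩
  refine tendsto_order.2 ⟨fun a ha => .of_forall fun k => ha.trans_le
    (le_lipschitzMajorant hb k hx), fun a ha => ?_⟩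
  obtain ⟨t, hxt, hta⟩ := exists_between ha
  obtain ⟨δ, hδ, hball⟩ := nhdsWithin_basis_ball.eventually_iff.1 (hu t hxt)
  obtain ⟨M, hM⟩ := hb
  have hfar : ∀ᶠ k : NNReal in atTop, M - t ≤ k * δ :=
    (NNReal.tendsto_coe_atTop.2 tendsto_id).atTop_mul_const hδ |>.eventually_ge_atTop _
  filter_upwards [hfar] with k hk
  refine (ciSup_le fun y => ?_).trans_lt hta
  rcases lt_or_ge (dist x y) δ with hy | hy
  · have hyt : h y < t := hball ⟨by rwa [mem_ball'], y.2⟩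
    have : 0 ≤ k * dist x y := by positivity
    linarith
  · have : k * δ ≤ k * dist x y := by gcongr
    linarith [hM (Set.mem_image_of_mem h y.2)]

end LipschitzMajorant

section CircleAverage

open InnerProductSpace

variable {h : ℂ → ℝ} {c : ℂ} {R : ℝ}

theorem circleIntegrable_of_upperSemicontinuousOn (hu : UpperSemicontinuousOn h (sphere c |R|))
    (hb : BddBelow (h '' sphere c |R|)) : CircleIntegrable h c R := by
  have hmem (θ : ℝ) : circleMap c R θ ∈ sphere c |R| := circleMap_mem_sphere' c R θ
  have husc : UpperSemicontinuous (fun θ => h (circleMap c R θ)) :=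
    upperSemicontinuousOn_univ_iff.1 <|
      hu.comp (continuous_circleMap c R).continuousOn fun θ _ => hmem θ
  obtain ⟨M, hM⟩ := hu.bddAbove_of_isCompact (isCompact_sphere c |R|)
  obtain ⟨L, hL⟩ := hb
  refine (intervalIntegrable_const (c := max |L| |M|)).mono_fun
    husc.measurable.aestronglyMeasurable (.of_forall fun θ => ?_)
  have hθ := Set.mem_image_of_mem h (hmem θ)
  exact (abs_le_max_abs_abs (hL hθ) (hM hθ)).trans (le_abs_self _)

theorem tendsto_circleAverage_lipschitzMajorant (hu : UpperSemicontinuousOn h (sphere c |R|))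
    (hb : BddBelow (h '' sphere c |R|)) :
    Tendsto (fun k => circleAverage (lipschitzMajorant h (sphere c |R|) k) c R) atTop
      (𝓝 (circleAverage h c R)) := by
  have hmem (θ : ℝ) : circleMap c R θ ∈ sphere c |R| := circleMap_mem_sphere' c R θ
  have hne : (sphere c |R|).Nonempty := ⟨_, hmem 0⟩
  obtain ⟨M, hM⟩ := hu.bddAbove_of_isCompact (isCompact_sphere c |R|)
  obtain ⟨L, hL⟩ := hb
  simp only [circleAverage_def]
  refine (intervalIntegral.tendsto_integral_filter_of_dominated_convergence
    (fun _ => max |L| |M|) (.of_forall fun k => ?_)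
    (.of_forall fun k => .of_forall fun θ _ => ?_) intervalIntegrable_const
    (.of_forall fun θ _ => tendsto_lipschitzMajorant (hu _ (hmem θ)) ⟨M, hM⟩ (hmem θ))).const_smul _
  · exact ((lipschitzWith_lipschitzMajorant hne ⟨M, hM⟩ k).continuous.comp
      (continuous_circleMap c R)).aestronglyMeasurable
  · exact abs_le_max_abs_abs
      ((hL (Set.mem_image_of_mem h (hmem θ))).trans (le_lipschitzMajorant ⟨M, hM⟩ k (hmem θ)))
      (lipschitzMajorant_le hne (fun y hy => hM (Set.mem_image_of_mem h hy)) k _)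

theorem circleAverage_norm_sub_sq (a c : ℂ) (R : ℝ) :
    circleAverage (fun z => ‖z - a‖ ^ 2) c R = ‖c - a‖ ^ 2 + R ^ 2 := by
  let p : ℂ → ℂ := fun z => (‖c - a‖ ^ 2 + R ^ 2 : ℝ) + 2 * (starRingEnd ℂ (c - a) * (z - c))
  have hp : HarmonicOnNhd (fun z => (p z).re) (closedBall c |R|) := fun z _ =>
    (show Differentiable ℂ p by fun_prop).analyticAt z |>.harmonicAt_re
  calc circleAverage (fun z => ‖z - a‖ ^ 2) c R = circleAverage (fun z => (p z).re) c R := by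
        refine circleAverage_congr_sphere fun z hz => ?_
        have hR : R ^ 2 = ‖z - c‖ ^ 2 := by rw [mem_sphere_iff_norm.1 hz, sq_abs]
        simp only [p, hR, Complex.sq_norm, Complex.normSq_apply, map_sub, Complex.add_re,
          Complex.ofReal_re, Complex.mul_re, Complex.mul_im, Complex.re_ofNat, Complex.im_ofNat,
          Complex.sub_re, Complex.sub_im, Complex.conj_re, Complex.conj_im]
        ring
    _ = (p c).re := hp.circleAverage_eq
    _ = ‖c - a‖ ^ 2 + R ^ 2 := by simp only [p, sub_self, mul_zero, add_zero, Complex.ofReal_re]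

end CircleAverage

section HarmonicMajorant

open InnerProductSpace

variable {h : ℂ → ℝ}

theorem exists_harmonicOnNhd_eq_re_mul_of_mem_span_fourier {T : ℝ} {s : C(AddCircle T, ℂ)}
    (hs : s ∈ Submodule.span ℂ (Set.range (@fourier T))) (a : ℂ) :
    ∃ p : ℂ → ℝ, HarmonicOnNhd p Set.univ ∧
      ∀ x : AddCircle T, (a * s x).re = p (AddCircle.toCircle x) := by
  have harmonic_monomial (b : ℂ) (k : ℕ) :
      HarmonicOnNhd (fun z : ℂ => (b * z ^ k).re) Set.univ := fun z _ =>
    (show Differentiable ℂ fun z : ℂ => b * z ^ k by fun_prop).analyticAt z |>.harmonicAt_re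
  induction hs using Submodule.span_induction generalizing a with
  | mem s hs =>
    obtain ⟨j, rfl⟩ := hs
    obtain ⟨k, rfl | rfl⟩ := Int.eq_nat_or_neg j
    · refine ⟨_, harmonic_monomial a k, fun x => ?_⟩
      rw [fourier_apply, AddCircle.toCircle_zsmul, zpow_natCast, Circle.coe_pow]
    · refine ⟨_, harmonic_monomial (starRingEnd ℂ a) k, fun x => ?_⟩
      rw [fourier_neg, fourier_apply, AddCircle.toCircle_zsmul, zpow_natCast, Circle.coe_pow,
        ← Complex.conj_re (a * _), map_mul, Complex.conj_conj]
  | zero => exact ⟨_, harmonic_monomial 0 0, fun x => by simp⟩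
  | add s t _ _ hs ht =>
    obtain ⟨p, hp, hsp⟩ := hs a
    obtain ⟨q, hq, htq⟩ := ht a
    exact ⟨p + q, hp.add hq, fun x => by
      rw [ContinuousMap.add_apply, mul_add, Complex.add_re, hsp, htq, Pi.add_apply]⟩
  | smul b s _ hs =>
    obtain ⟨p, hp, hsp⟩ := hs (a * b)
    exact ⟨p, hp, fun x => by rw [← hsp, ContinuousMap.smul_apply, smul_eq_mul, mul_assoc]⟩

theorem exists_harmonicOnNhd_abs_sub_lt {φ : ℂ → ℝ} (hφ : ContinuousOn φ (sphere 0 1)) {η : ℝ}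
    (hη : 0 < η) :
    ∃ p : ℂ → ℝ, HarmonicOnNhd p Set.univ ∧ ∀ z ∈ sphere (0 : ℂ) 1, |φ z - p z| < η := by
  have : Fact (0 < 2 * π) := ⟨by positivity⟩
  let Φ : C(AddCircle (2 * π), ℂ) :=
    ⟨fun x => (φ (AddCircle.toCircle x) : ℂ), Complex.continuous_ofReal.comp <|
      hφ.comp_continuous (by fun_prop)
        fun x => mem_sphere_zero_iff_norm.2 (Circle.norm_coe _)⟩
  have hΦ : Φ ∈ (Submodule.span ℂ (Set.range (@fourier (2 * π)))).topologicalClosure := by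
    rw [span_fourier_closure_eq_top]
    trivial
  obtain ⟨s, hs, hdist⟩ := Metric.mem_closure_iff.1 hΦ η hη
  obtain ⟨p, hp, hsp⟩ := exists_harmonicOnNhd_eq_re_mul_of_mem_span_fourier hs 1
  refine ⟨p, hp, fun z hz => ?_⟩
  obtain ⟨x, hx⟩ := (AddCircle.homeomorphCircle two_pi_pos.ne').surjective ⟨z, hz⟩
  obtain rfl : (AddCircle.toCircle x : ℂ) = z := by
    rw [← AddCircle.homeomorphCircle_apply two_pi_pos.ne', hx]
  calc |φ (AddCircle.toCircle x) - p (AddCircle.toCircle x)| = |(Φ x - s x).re| := by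
        rw [← hsp, one_mul, Complex.sub_re]
        rfl
    _ ≤ dist (Φ x) (s x) := by
        rw [Complex.dist_eq]
        exact Complex.abs_re_le_norm _
    _ < η := (ContinuousMap.dist_lt_iff hη).1 hdist x

theorem exists_harmonicOnNhd_majorant (hu : UpperSemicontinuousOn h (sphere 0 1))
    (hb : BddBelow (h '' sphere 0 1)) {ε : ℝ} (hε : 0 < ε) :
    ∃ p : ℂ → ℝ, HarmonicOnNhd p Set.univ ∧ (∀ z ∈ sphere (0 : ℂ) 1, h z ≤ p z) ∧
      p 0 ≤ circleAverage h 0 1 + ε := by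
  have hne : (sphere (0 : ℂ) 1).Nonempty := NormedSpace.sphere_nonempty.2 zero_le_one
  have hbdd := hu.bddAbove_of_isCompact (isCompact_sphere 0 1)
  have hlim : Tendsto (fun k => circleAverage (lipschitzMajorant h (sphere 0 1) k) 0 1) atTop
      (𝓝 (circleAverage h 0 1)) := by
    simpa only [abs_one] using
      tendsto_circleAverage_lipschitzMajorant (h := h) (c := 0) (R := 1) (by simpa) (by simpa)
  have hε3 : 0 < ε / 3 := by positivity
  obtain ⟨k, hk⟩ := (hlim.eventually_lt_const (lt_add_of_pos_right _ hε3)).exists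
  set φ := lipschitzMajorant h (sphere 0 1) k
  have hφ : Continuous φ := (lipschitzWith_lipschitzMajorant hne hbdd k).continuous
  obtain ⟨p, hp, hφp⟩ := exists_harmonicOnNhd_abs_sub_lt hφ.continuousOn hε3
  have hp_cont : Continuous p := continuousOn_univ.1 hp.continuousOn
  refine ⟨fun z => p z + ε / 3, hp.add (harmonicOnNhd_const _), fun z hz => ?_, ?_⟩
  · linarith [le_lipschitzMajorant hbdd k hz, (abs_lt.1 (hφp z hz)).2]
  · have hp0 : circleAverage p 0 1 = p 0 := (hp.mono (Set.subset_univ _)).circleAverage_eq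
    have hpφ : circleAverage p 0 1 ≤ circleAverage (fun z => φ z + ε / 3) 0 1 :=
      circleAverage_mono hp_cont.continuousOn.circleIntegrable'
        (hφ.add_const _).continuousOn.circleIntegrable' fun z hz => by
          rw [abs_one] at hz
          linarith [(abs_lt.1 (hφp z hz)).1]
    rw [circleAverage_fun_add hφ.continuousOn.circleIntegrable' (circleIntegrable_const _ _ _),
      circleAverage_const] at hpφ
    linarith

end HarmonicMajorant

section MaximumPrinciple

open InnerProductSpace

theorem eventually_closedBall_abs_subset {X : Type*} [PseudoMetricSpace X] {s : Set X} {x : X}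
    (hs : s ∈ 𝓝 x) : ∀ᶠ r in 𝓝[>] (0 : ℝ), closedBall x |r| ⊆ s := by
  filter_upwards [nhdsWithin_le_nhds (eventually_closedBall_subset hs), self_mem_nhdsWithin]
    with r hr (hr0 : 0 < r)
  rwa [abs_of_pos hr0]

variable {h : ℂ → ℝ} {s : Set ℂ} {c : ℂ}

theorem eventually_circleIntegrable_of_upperSemicontinuousOn (hs : s ∈ 𝓝 c)
    (hu : UpperSemicontinuousOn h s) (hb : BddBelow (h '' s)) :
    ∀ᶠ r in 𝓝[>] (0 : ℝ), CircleIntegrable h c r := by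
  filter_upwards [eventually_closedBall_abs_subset hs] with r hr
  have hsphere : sphere c |r| ⊆ s := sphere_subset_closedBall.trans hr
  exact circleIntegrable_of_upperSemicontinuousOn (hu.mono hsphere)
    (hb.mono (Set.image_mono hsphere))

theorem le_of_frequently_le_circleAverage {a : ℂ} {R M : ℝ}
    (hu : UpperSemicontinuousOn h (closedBall a R)) (hb : BddBelow (h '' closedBall a R))
    (hmean : ∀ c ∈ ball a R, ∃ᶠ r in 𝓝[>] (0 : ℝ), h c ≤ circleAverage h c r)
    (hM : ∀ z ∈ sphere a R, h z ≤ M) {z : ℂ} (hz : z ∈ closedBall a R) : h z ≤ M := by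
  by_contra! hlt
  obtain ⟨ε, hε, hεR⟩ := exists_pos_mul_lt (sub_pos.2 hlt) (R ^ 2)
  -- The perturbation is strictly subharmonic, so its maximum cannot be attained in the interior.
  let v : ℂ → ℝ := fun x => h x + ε * ‖x - a‖ ^ 2
  have hq : Continuous fun x : ℂ => ε * ‖x - a‖ ^ 2 := by fun_prop
  obtain ⟨c, hc, hmax⟩ := (hu.add (hq.upperSemicontinuous.upperSemicontinuousOn _))
    |>.exists_isMaxOn ⟨z, hz⟩ (isCompact_closedBall a R)
  have hhv : h z ≤ v c := (le_add_of_nonneg_right (by positivity)).trans (hmax hz)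
  have hc_ball : c ∈ ball a R := by
    refine (mem_closedBall.1 hc).lt_of_ne fun hcR => ?_
    have hvc : v c = h c + ε * R ^ 2 := by rw [← hcR, dist_eq_norm]
    linarith [hM c hcR]
  have hnhds : closedBall a R ∈ 𝓝 c :=
    mem_of_superset (isOpen_ball.mem_nhds hc_ball) ball_subset_closedBall
  obtain ⟨r, hmean_r, hint, hr, hr0⟩ := ((hmean c hc_ball).and_eventually
    ((eventually_circleIntegrable_of_upperSemicontinuousOn hnhds hu hb).and
      ((eventually_closedBall_abs_subset hnhds).and self_mem_nhdsWithin))).exists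
  have hq_int : CircleIntegrable (fun x => ε * ‖x - a‖ ^ 2) c r :=
    hq.continuousOn.circleIntegrable'
  have hq_avg : circleAverage (fun x => ε * ‖x - a‖ ^ 2) c r = ε * (‖c - a‖ ^ 2 + r ^ 2) := by
    rw [← circleAverage_norm_sub_sq]
    exact circleAverage_fun_smul (a := ε)
  have hv_avg : circleAverage h c r + ε * (‖c - a‖ ^ 2 + r ^ 2) ≤ h c + ε * ‖c - a‖ ^ 2 := by
    rw [← hq_avg, ← circleAverage_fun_add hint hq_int]
    exact circleAverage_mono_on_of_le_circle (hint.add hq_int)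
      fun x hx => hmax (hr (sphere_subset_closedBall hx))
  have : 0 < ε * r ^ 2 := mul_pos hε (pow_pos hr0 2)
  linarith

theorem frequently_sub_le_circleAverage {p : ℂ → ℝ} (hp : HarmonicOnNhd p Set.univ)
    (hs : s ∈ 𝓝 c) (hu : UpperSemicontinuousOn h s) (hb : BddBelow (h '' s))
    (hmean : ∃ᶠ r in 𝓝[>] (0 : ℝ), h c ≤ circleAverage h c r) :
    ∃ᶠ r in 𝓝[>] (0 : ℝ), h c - p c ≤ circleAverage (fun z => h z - p z) c r := by
  refine (hmean.and_eventually
    (eventually_circleIntegrable_of_upperSemicontinuousOn hs hu hb)).mono fun r ⟨hr, hint⟩ => ?_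
  have hp_int : CircleIntegrable p c r :=
    (hp.mono (Set.subset_univ _)).continuousOn.circleIntegrable'
  have hp_avg : circleAverage p c r = p c := (hp.mono (Set.subset_univ _)).circleAverage_eq
  rw [circleAverage_fun_sub hint hp_int, hp_avg]
  gcongr

theorem le_circleAverage_of_frequently_le_circleAverage
    (hu : UpperSemicontinuousOn h (closedBall 0 1)) (hb : BddBelow (h '' closedBall 0 1))
    (hmean : ∀ c ∈ ball (0 : ℂ) 1, ∃ᶠ r in 𝓝[>] (0 : ℝ), h c ≤ circleAverage h c r) :
    h 0 ≤ circleAverage h 0 1 := by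
  refine le_of_forall_pos_le_add fun ε hε => ?_
  obtain ⟨p, hp, hle, hp0⟩ := exists_harmonicOnNhd_majorant (hu.mono sphere_subset_closedBall)
    (hb.mono (Set.image_mono sphere_subset_closedBall)) hε
  have hp_cont : Continuous p := continuousOn_univ.1 hp.continuousOn
  have hneg_cont : Continuous fun z => -p z := hp_cont.neg
  have husc : UpperSemicontinuousOn (fun z => h z - p z) (closedBall 0 1) := by
    simpa only [sub_eq_add_neg] using
      hu.add (hneg_cont.upperSemicontinuous.upperSemicontinuousOn (closedBall 0 1))
  have hbdd : BddBelow ((fun z => h z - p z) '' closedBall 0 1) := by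
    obtain ⟨L, hL⟩ := hb
    obtain ⟨K, hK⟩ := (isCompact_closedBall (0 : ℂ) 1).bddAbove_image hp_cont.continuousOn
    exact ⟨L - K, Set.forall_mem_image.2 fun z hz =>
      sub_le_sub (hL (Set.mem_image_of_mem h hz)) (hK (Set.mem_image_of_mem p hz))⟩
  have h0 : h 0 - p 0 ≤ 0 := le_of_frequently_le_circleAverage husc hbdd
    (fun c hc => frequently_sub_le_circleAverage hp
      (mem_of_superset (isOpen_ball.mem_nhds hc) ball_subset_closedBall) hu hb (hmean c hc))
    (fun z hz => sub_nonpos.2 (hle z hz)) (mem_closedBall_self zero_le_one)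
  linarith

end MaximumPrinciple

section Truncation

/-- The truncation `max t m` of an extended real `t` at the real level `m`, as a real number;
for `t = ⊤` the value is the junk value `0`. -/
def truncBelow (m : ℝ) (t : EReal) : ℝ :=
  (t ⊔ (m : EReal)).toReal

variable {m : ℝ} {t t' : EReal}

theorem coe_truncBelow (ht : t ≠ ⊤) : (truncBelow m t : EReal) = t ⊔ m :=
  EReal.coe_toReal (max_lt ht.lt_top (EReal.coe_lt_top m)).ne
    (lt_max_of_lt_right (EReal.bot_lt_coe m)).ne'

theorem le_truncBelow (ht : t ≠ ⊤) : m ≤ truncBelow m t := by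
  rw [← EReal.coe_le_coe_iff, coe_truncBelow ht]
  exact le_sup_right

theorem truncBelow_le_truncBelow (ht' : t' ≠ ⊤) (h : t ≤ t') :
    truncBelow m t ≤ truncBelow m t' := by
  rw [← EReal.coe_le_coe_iff, coe_truncBelow ht', coe_truncBelow (ne_top_of_le_ne_top ht' h)]
  exact sup_le_sup_right h _

theorem upperSemicontinuousOn_truncBelow {X : Type*} [TopologicalSpace X] {u : X → EReal}
    {S : Set X} (hu : UpperSemicontinuousOn u S) (htop : ∀ x ∈ S, u x ≠ ⊤) (m : ℝ) :
    UpperSemicontinuousOn (fun x => truncBelow m (u x)) S := by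
  intro x hx y hy
  rw [← EReal.coe_lt_coe_iff, coe_truncBelow (htop x hx), sup_lt_iff] at hy
  filter_upwards [hu x hx y hy.1, self_mem_nhdsWithin] with z hz hzS
  rw [← EReal.coe_lt_coe_iff, coe_truncBelow (htop z hzS)]
  exact sup_lt_iff.2 ⟨hz, hy.2⟩

theorem bddBelow_image_truncBelow {X : Type*} {u : X → EReal} {S : Set X}
    (htop : ∀ x ∈ S, u x ≠ ⊤) (m : ℝ) : BddBelow ((fun x => truncBelow m (u x)) '' S) :=
  ⟨m, Set.forall_mem_image.2 fun x hx => le_truncBelow (htop x hx)⟩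

end Truncation

section CircleMean

theorem upperSemicontinuousOn_comp_add_smul {E γ : Type*} [AddCommGroup E] [TopologicalSpace E]
    [ContinuousAdd E] [Module ℂ E] [ContinuousSMul ℂ E] [Preorder γ] {u : E → γ} {S : Set E}
    {a b : E} {D : Set ℂ} (hu : UpperSemicontinuousOn u S)
    (hD : Set.MapsTo (fun l : ℂ => a + l • b) D S) :
    UpperSemicontinuousOn (fun l : ℂ => u (a + l • b)) D :=
  hu.comp (g := fun l : ℂ => a + l • b) (by fun_prop) hD

variable {n : ℕ} {u v : EuclideanSpace ℂ (Fin n) → EReal} {S : Set (EuclideanSpace ℂ (Fin n))}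
  {a b : EuclideanSpace ℂ (Fin n)}

theorem circleMean_eq_iInf_circleAverage (u : EuclideanSpace ℂ (Fin n) → EReal)
    (a b : EuclideanSpace ℂ (Fin n)) (c : ℂ) (r : ℝ) :
    circleMean u (a + c • b) ((r : ℂ) • b) =
      ⨅ m : ℕ, ((circleAverage (fun l => truncBelow (-m) (u (a + l • b))) c r : ℝ) : EReal) := by
  simp only [circleMean, circleAverage_def, smul_eq_mul, truncBelow, circleMap, add_assoc,
    add_smul, smul_smul, mul_comm (r : ℂ)]

theorem circleMean_eq_iInf_circleAverage_zero_one (u : EuclideanSpace ℂ (Fin n) → EReal)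
    (a b : EuclideanSpace ℂ (Fin n)) :
    circleMean u a b =
      ⨅ m : ℕ, ((circleAverage (fun l => truncBelow (-m) (u (a + l • b))) 0 1 : ℝ) : EReal) := by
  simpa only [zero_smul, add_zero, Complex.ofReal_one, one_smul] using
    circleMean_eq_iInf_circleAverage u a b 0 1

theorem circleMean_congr (h : ∀ l ∈ sphere (0 : ℂ) 1, u (a + l • b) = v (a + l • b)) :
    circleMean u a b = circleMean v a b := by
  rw [← abs_one (α := ℝ)] at h
  simp only [circleMean_eq_iInf_circleAverage_zero_one]
  refine iInf_congr fun m => congrArg _ (circleAverage_congr_sphere fun l hl => ?_)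
  exact congrArg _ (h l hl)

theorem circleIntegrable_truncBelow_comp_add_smul (hu : UpperSemicontinuousOn u S)
    (htop : ∀ z ∈ S, u z ≠ ⊤) {c : ℂ} {r : ℝ}
    (hS : Set.MapsTo (fun l : ℂ => a + l • b) (sphere c |r|) S) (m : ℝ) :
    CircleIntegrable (fun l => truncBelow m (u (a + l • b))) c r :=
  circleIntegrable_of_upperSemicontinuousOn
    (upperSemicontinuousOn_truncBelow (upperSemicontinuousOn_comp_add_smul hu hS)
      (fun _ hl => htop _ (hS hl)) m)
    (bddBelow_image_truncBelow (fun _ hl => htop _ (hS hl)) m)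

theorem circleMean_mono (hu : UpperSemicontinuousOn u S) (hv : UpperSemicontinuousOn v S)
    (htop : ∀ z ∈ S, v z ≠ ⊤) (huv : ∀ z ∈ S, u z ≤ v z)
    (hS : Set.MapsTo (fun l : ℂ => a + l • b) (sphere 0 1) S) :
    circleMean u a b ≤ circleMean v a b := by
  simp only [circleMean_eq_iInf_circleAverage_zero_one]
  rw [← abs_one (α := ℝ)] at hS
  exact iInf_mono fun m => EReal.coe_le_coe_iff.2 <| circleAverage_mono
    (circleIntegrable_truncBelow_comp_add_smul hu
      (fun z hz => ne_top_of_le_ne_top (htop z hz) (huv z hz)) hS _)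
    (circleIntegrable_truncBelow_comp_add_smul hv htop hS _)
    fun l hl => truncBelow_le_truncBelow (htop _ (hS hl)) (huv _ (hS hl))

theorem le_circleMean_iff {c : ℂ} {r : ℝ} (hu : UpperSemicontinuousOn u S)
    (htop : ∀ z ∈ S, u z ≠ ⊤) (hS : Set.MapsTo (fun l : ℂ => a + l • b) (closedBall c |r|) S) :
    u (a + c • b) ≤ circleMean u (a + c • b) ((r : ℂ) • b) ↔
      ∀ m : ℕ, truncBelow (-m) (u (a + c • b)) ≤
        circleAverage (fun l => truncBelow (-m) (u (a + l • b))) c r := by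
  have hsphere := hS.mono_left sphere_subset_closedBall
  have hc : u (a + c • b) ≠ ⊤ := htop _ (hS (mem_closedBall_self (abs_nonneg r)))
  rw [circleMean_eq_iInf_circleAverage, le_iInf_iff]
  refine forall_congr' fun m => ?_
  have hm : (-m : ℝ) ≤ circleAverage (fun l => truncBelow (-m) (u (a + l • b))) c r :=
    (circleAverage_const (-m : ℝ) c r).symm.trans_le <|
      circleAverage_mono (circleIntegrable_const _ _ _)
        (circleIntegrable_truncBelow_comp_add_smul hu htop hsphere _)
        fun l hl => le_truncBelow (htop _ (hsphere hl))
  rw [← EReal.coe_le_coe_iff, coe_truncBelow hc, sup_le_iff,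
    and_iff_left (EReal.coe_le_coe_iff.2 hm)]

theorem le_circleMean_of_frequently (hu : UpperSemicontinuousOn u S) (htop : ∀ z ∈ S, u z ≠ ⊤)
    (hmean : ∀ x ∈ S, ∀ b, ∃ᶠ r : ℝ in 𝓝[>] 0, u x ≤ circleMean u x ((r : ℂ) • b))
    (hS : Set.MapsTo (fun l : ℂ => a + l • b) (closedBall 0 1) S) :
    u a ≤ circleMean u a b := by
  have hdisc : u (a + (0 : ℂ) • b) ≤ circleMean u (a + (0 : ℂ) • b) (((1 : ℝ) : ℂ) • b) := by
    refine (le_circleMean_iff hu htop (by rwa [abs_one])).2 fun m => ?_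
    refine le_circleAverage_of_frequently_le_circleAverage
      (upperSemicontinuousOn_truncBelow (upperSemicontinuousOn_comp_add_smul hu hS)
        (fun l hl => htop _ (hS hl)) _)
      (bddBelow_image_truncBelow (fun l hl => htop _ (hS hl)) _) fun c hc => ?_
    have hnhds : closedBall 0 1 ∈ 𝓝 c :=
      mem_of_superset (isOpen_ball.mem_nhds hc) ball_subset_closedBall
    refine ((hmean _ (hS (ball_subset_closedBall hc)) b).and_eventually
      (eventually_closedBall_abs_subset hnhds)).mono fun r ⟨hr, hsub⟩ => ?_
    exact (le_circleMean_iff hu htop (hS.mono_left hsub)).1 hr m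
  simpa only [zero_smul, add_zero, Complex.ofReal_one, one_smul] using hdisc

end CircleMean

section Plurisubharmonic

variable {n : ℕ} {Ω Ω₂ : Set (EuclideanSpace ℂ (Fin n))}
  {u v g : EuclideanSpace ℂ (Fin n) → EReal} {x : EuclideanSpace ℂ (Fin n)}

theorem IsPSHOn.sup (hu : IsPSHOn Ω u) (hv : IsPSHOn Ω v) : IsPSHOn Ω fun z => u z ⊔ v z := by
  obtain ⟨hu_usc, hu_top, hu_bot, hu_mean⟩ := hu
  obtain ⟨hv_usc, hv_top, -, hv_mean⟩ := hv
  have husc : UpperSemicontinuousOn (fun z => u z ⊔ v z) Ω := hu_usc.sup hv_usc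
  have htop : ∀ z ∈ Ω, u z ⊔ v z ≠ ⊤ := fun z hz =>
    (max_lt (hu_top z hz).lt_top (hv_top z hz).lt_top).ne
  refine ⟨husc, htop, fun z hz => ?_, fun a b hab => ?_⟩
  · obtain ⟨w, hw, hw_bot⟩ := hu_bot z hz
    exact ⟨w, hw, ne_bot_of_le_ne_bot hw_bot le_sup_left⟩
  · have hsphere : Set.MapsTo (fun l : ℂ => a + l • b) (sphere 0 1) Ω := fun l hl =>
      hab l (mem_sphere_zero_iff_norm.1 hl).le
    exact sup_le
      ((hu_mean a b hab).trans <|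
        circleMean_mono hu_usc husc htop (fun _ _ => le_sup_left) hsphere)
      ((hv_mean a b hab).trans <|
        circleMean_mono hv_usc husc htop (fun _ _ => le_sup_right) hsphere)

theorem connectedComponentIn_subset_of_closure_inter_subset {X : Type*} [TopologicalSpace X]
    [LocallyConnectedSpace X] {s t : Set X} {x : X} (ht : IsOpen t) (hts : t ⊆ s) (hx : x ∈ t)
    (h : closure (connectedComponentIn t x) ∩ s ⊆ t) :
    connectedComponentIn s x ⊆ connectedComponentIn t x := by
  refine isPreconnected_connectedComponentIn.subset_of_closure_inter_subset
    ht.connectedComponentIn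
    ⟨x, mem_connectedComponentIn (hts hx), mem_connectedComponentIn hx⟩ ?_
  rintro p ⟨hp_closure, hps⟩
  have hpt : p ∈ t := h ⟨hp_closure, connectedComponentIn_subset _ _ hps⟩
  obtain ⟨y, hyp, hyx⟩ := mem_closure_iff.1 hp_closure _ ht.connectedComponentIn
    (mem_connectedComponentIn hpt)
  rw [connectedComponentIn_eq hyx, ← connectedComponentIn_eq hyp]
  exact mem_connectedComponentIn hpt

theorem IsPSHOn.mono_of_eventually_ne_bot (hu : IsPSHOn Ω u) (hΩ₂ : IsOpen Ω₂) (hsub : Ω₂ ⊆ Ω)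
    (hbot : ∀ᶠ z in 𝓝ˢ (Ω \ Ω₂), u z ≠ ⊥) : IsPSHOn Ω₂ u := by
  obtain ⟨hu_usc, hu_top, hu_bot, hu_mean⟩ := hu
  refine ⟨hu_usc.mono hsub, fun z hz => hu_top z (hsub hz), fun z hz => ?_,
    fun a b hab => hu_mean a b fun l hl => hsub (hab l hl)⟩
  by_contra! hcomp
  have hclosure : closure (connectedComponentIn Ω₂ z) ∩ Ω ⊆ Ω₂ := by
    rintro p ⟨hp, hpΩ⟩
    by_contra hpΩ₂
    obtain ⟨y, hy, hy_bot⟩ := ((mem_closure_iff_frequently.1 hp).and_eventually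
      (hbot.filter_mono (nhds_le_nhdsSet (Set.mem_sdiff_of_mem hpΩ hpΩ₂)))).exists
    exact hy_bot (hcomp y hy)
  obtain ⟨w, hw, hw_bot⟩ := hu_bot z (hsub hz)
  exact hw_bot (hcomp w (connectedComponentIn_subset_of_closure_inter_subset hΩ₂ hsub hz
    hclosure hw))

theorem eventually_forall_add_smul_mem {E : Type*} [AddCommGroup E] [TopologicalSpace E]
    [ContinuousAdd E] [Module ℂ E] [ContinuousSMul ℂ E] {s : Set E} {x : E} (hs : s ∈ 𝓝 x)
    (b : E) : ∀ᶠ r : ℝ in 𝓝 0, ∀ l ∈ closedBall (0 : ℂ) 1, x + l • ((r : ℂ) • b) ∈ s := by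
  refine (isCompact_closedBall (0 : ℂ) 1).eventually_forall_of_forall_eventually fun l _ => ?_
  have hcont : ContinuousAt (fun q : ℝ × ℂ => x + q.2 • ((q.1 : ℂ) • b)) (0, l) := by fun_prop
  refine hcont.eventually_mem ?_
  simpa only [Complex.ofReal_zero, zero_smul, smul_zero, add_zero] using hs

theorem IsPSHOn.eventually_le_circleMean (hu : IsPSHOn Ω u) (hΩ : Ω ∈ 𝓝 x) (huv : v =ᶠ[𝓝 x] u)
    (b : EuclideanSpace ℂ (Fin n)) :
    ∀ᶠ r : ℝ in 𝓝 0, v x ≤ circleMean v x ((r : ℂ) • b) := by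
  filter_upwards [eventually_forall_add_smul_mem hΩ b, eventually_forall_add_smul_mem huv b]
    with r hrΩ hr_eq
  have hmean : circleMean v x ((r : ℂ) • b) = circleMean u x ((r : ℂ) • b) :=
    circleMean_congr fun l hl => hr_eq l (sphere_subset_closedBall hl)
  rw [huv.self_of_nhds, hmean]
  exact hu.2.2.2 x _ fun l hl => hrΩ l (mem_closedBall_zero_iff.2 hl)

theorem isPSHOn_of_eventuallyEq
    (hloc : ∀ x ∈ Ω, ∃ U ∈ 𝓝 x, ∃ v, IsPSHOn U v ∧ u =ᶠ[𝓝 x] v)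
    (hbot : ∀ z ∈ Ω, ∃ w ∈ connectedComponentIn Ω z, u w ≠ ⊥) : IsPSHOn Ω u := by
  have husc : UpperSemicontinuousOn u Ω := fun x hx y hy => by
    obtain ⟨U, hU, v, hv, huv⟩ := hloc x hx
    have hvy : v x < y := huv.self_of_nhds ▸ hy
    have hlt : ∀ᶠ z in 𝓝 x, v z < y := by
      simpa only [nhdsWithin_eq_nhds.2 hU] using hv.1 x (mem_of_mem_nhds hU) y hvy
    filter_upwards [nhdsWithin_le_nhds hlt, nhdsWithin_le_nhds huv] with z hz hzv
    exact hzv.trans_lt hz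
  have htop : ∀ z ∈ Ω, u z ≠ ⊤ := fun z hz => by
    obtain ⟨U, hU, v, hv, huv⟩ := hloc z hz
    rw [huv.self_of_nhds]
    exact hv.2.1 z (mem_of_mem_nhds hU)
  refine ⟨husc, htop, hbot, fun a b hab => le_circleMean_of_frequently husc htop
    (fun x hx b => ?_) fun l hl => hab l (mem_closedBall_zero_iff.1 hl)⟩
  obtain ⟨U, hU, v, hv, huv⟩ := hloc x hx
  exact ((hv.eventually_le_circleMean hU huv b).filter_mono nhdsWithin_le_nhds).frequently

theorem IsPSHOn.piecewise [∀ z, Decidable (z ∈ Ω₂)] (hΩ : IsOpen Ω) (hΩ₂ : IsOpen Ω₂)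
    (hsub : Ω₂ ⊆ Ω) (hv : IsPSHOn Ω₂ v) (hg : IsPSHOn Ω g)
    (hvg : ∀ᶠ z in 𝓝ˢ (Ω \ Ω₂), z ∈ Ω₂ → v z = g z) :
    IsPSHOn Ω (Ω₂.piecewise v g) := by
  refine isPSHOn_of_eventuallyEq (fun x hx => ?_) fun z hz => ?_
  · by_cases hxΩ₂ : x ∈ Ω₂
    · exact ⟨Ω₂, hΩ₂.mem_nhds hxΩ₂, v, hv,
        (Ω₂.piecewise_eqOn v g).eventuallyEq_of_mem (hΩ₂.mem_nhds hxΩ₂)⟩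
    · refine ⟨Ω, hΩ.mem_nhds hx, g, hg, ?_⟩
      filter_upwards [hvg.filter_mono (nhds_le_nhdsSet (Set.mem_sdiff_of_mem hx hxΩ₂))] with y hy
      by_cases hyΩ₂ : y ∈ Ω₂
      · rw [Set.piecewise_eq_of_mem _ _ _ hyΩ₂, hy hyΩ₂]
      · exact Set.piecewise_eq_of_notMem _ _ _ hyΩ₂
  · obtain ⟨w, hw, hw_bot⟩ := hg.2.2.1 z hz
    by_cases hwΩ₂ : w ∈ Ω₂
    · obtain ⟨y, hy, hy_bot⟩ := hv.2.2.1 w hwΩ₂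
      have hyz : y ∈ connectedComponentIn Ω z := by
        rw [connectedComponentIn_eq hw]
        exact connectedComponentIn_mono w hsub hy
      refine ⟨y, hyz, ?_⟩
      rwa [Set.piecewise_eq_of_mem _ _ _ (connectedComponentIn_subset _ _ hy)]
    · exact ⟨w, hw, by rwa [Set.piecewise_eq_of_notMem _ _ _ hwΩ₂]⟩

end Plurisubharmonic

section Envelope

variable {n : ℕ} {Ω Ω₂ : Set (EuclideanSpace ℂ (Fin n))} {f : EuclideanSpace ℂ (Fin n) → ℝ}
  {u g : EuclideanSpace ℂ (Fin n) → EReal} {z : EuclideanSpace ℂ (Fin n)}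

theorem IsPSHOn.le_pshEnvelope (hu : IsPSHOn Ω u) (huf : ∀ w ∈ Ω, u w ≤ (f w : EReal))
    (z : EuclideanSpace ℂ (Fin n)) : u z ≤ pshEnvelope Ω f z :=
  le_sSup ⟨u, hu, huf, rfl⟩

theorem pshEnvelope_le {t : EReal}
    (h : ∀ u, IsPSHOn Ω u → (∀ w ∈ Ω, u w ≤ (f w : EReal)) → u z ≤ t) :
    pshEnvelope Ω f z ≤ t := by
  refine sSup_le ?_
  rintro _ ⟨u, hu, huf, rfl⟩
  exact h u hu huf

theorem pshEnvelope_localization_general (hΩ : IsOpen Ω) (hΩ₂ : IsOpen Ω₂) (hsub : Ω₂ ⊆ Ω)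
    (hg : IsPSHOn Ω g) (hgf : ∀ w ∈ Ω, g w ≤ (f w : EReal))
    (heq : ∀ᶠ w in 𝓝ˢ (Ω \ Ω₂), g w = (f w : EReal)) (hz : z ∈ Ω₂) :
    pshEnvelope Ω₂ f z = pshEnvelope Ω f z := by
  classical
  have hg_bot : ∀ᶠ w in 𝓝ˢ (Ω \ Ω₂), g w ≠ ⊥ := heq.mono fun w hw => hw ▸ EReal.coe_ne_bot _
  refine le_antisymm (pshEnvelope_le fun u hu huf => ?_) (pshEnvelope_le fun u hu huf => ?_)
  · have hug : IsPSHOn Ω₂ fun w => u w ⊔ g w :=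
      hu.sup (hg.mono_of_eventually_ne_bot hΩ₂ hsub hg_bot)
    have hglue : IsPSHOn Ω (Ω₂.piecewise (fun w => u w ⊔ g w) g) :=
      hug.piecewise hΩ hΩ₂ hsub hg <| heq.mono fun w hw hwΩ₂ => sup_eq_right.2 (hw ▸ huf w hwΩ₂)
    have hglue_le : ∀ w ∈ Ω, Ω₂.piecewise (fun w => u w ⊔ g w) g w ≤ (f w : EReal) := by
      intro w hw
      rw [Set.piecewise]
      split_ifs with hwΩ₂
      exacts [sup_le (huf w hwΩ₂) (hgf w hw), hgf w hw]
    calc u z ≤ Ω₂.piecewise (fun w => u w ⊔ g w) g z := by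
          rw [Set.piecewise_eq_of_mem _ _ _ hz]
          exact le_sup_left
      _ ≤ pshEnvelope Ω f z := hglue.le_pshEnvelope hglue_le z
  · have hug : IsPSHOn Ω₂ fun w => u w ⊔ g w := (hu.sup hg).mono_of_eventually_ne_bot hΩ₂ hsub <|
      hg_bot.mono fun w hw => ne_bot_of_le_ne_bot hw le_sup_right
    exact le_sup_left.trans <| hug.le_pshEnvelope
      (fun w hw => sup_le (huf w (hsub hw)) (hgf w (hsub hw))) z

end Envelope

/-- **Theorem 9.** Let `Ω₂ ⊆ Ω` be open, `f` continuous on `Ω`, `g` plurisubharmonic on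
`Ω` with `g ≤ f`, and suppose `f = g` on an open set `N ⊆ Ω` containing the closure of
`Ω \ Ω₂` taken in `Ω`. Then `P_{Ω₂}(f|_{Ω₂}) = P_Ω f` on `Ω₂`. -/
theorem pshEnvelope_localization {n : ℕ} (Ω Ω₂ : Set (EuclideanSpace ℂ (Fin n)))
    (hΩ : IsOpen Ω) (hΩ₂ : IsOpen Ω₂) (hsub : Ω₂ ⊆ Ω)
    (f : EuclideanSpace ℂ (Fin n) → ℝ) (hf : ContinuousOn f Ω)
    (g : EuclideanSpace ℂ (Fin n) → EReal) (hg : IsPSHOn Ω g)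
    (hgf : ∀ z ∈ Ω, g z ≤ ((f z : ℝ) : EReal))
    (N : Set (EuclideanSpace ℂ (Fin n))) (hN : IsOpen N) (hNΩ : N ⊆ Ω)
    (hclos : closure (Ω \ Ω₂) ∩ Ω ⊆ N)
    (heq : ∀ z ∈ N, g z = ((f z : ℝ) : EReal)) :
    ∀ z ∈ Ω₂, pshEnvelope Ω₂ f z = pshEnvelope Ω f z := by
  have hN_nhds : N ∈ 𝓝ˢ (Ω \ Ω₂) :=
    hN.mem_nhdsSet.2 fun x hx => hclos ⟨subset_closure hx, hx.1⟩
  exact fun z hz => pshEnvelope_localization_general hΩ hΩ₂ hsub hg hgf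
    (mem_of_superset hN_nhds heq) hz
end
end
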